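/- arXiv:math/9412213 — 3 statements merged into one kernel-verified Lean document; each statement's English description precedes it below -/
import Mathlib

section
/- Let 1 < p < q < 2 and α = √((p−1)/(q−1)). Let x1 ≥ x2 > 0 with x1^p + x2^p = 1 and 1/2 < x1^p ≤ 1/q, and let y1, y2 > 0 with y1^q + y2^q = 1 such that, setting u = x2^p/x1^p and v = y2^q/y1^q, the relation (2−q)·α·v^{−1/2}·(1−v) = (2−p)·u^{−1/2}·(1−u) holds. Then for every real r, [ y1^q·|1 + α(y2/y1)^{q/2} r|^q + y2^q·|1 − α(y1/y2)^{q/2} r|^q ]^{1/q} ≤ [ x1^p·|1 + (x2/x1)^{p/2} r|^p + x2^p·|1 − (x1/x2)^{p/2} r|^p ]^{1/p}, with equality only for r = 0. -/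
/-! Put `c = p - 1`, `d = q - 1`, so that `α² d = c`, and let `a = √u`, `b = √v`. Then `x1^p` and
`x2^p` are the weights `1 / (1 + a²)` and `a² / (1 + a²)` of a variable `X` with values `a` and
`-1/a`, which has mean zero and variance one; likewise for `y1`, `y2` and a variable `Y` built on
`b`. The claim is `‖1 + α r Y‖_q < ‖1 + r X‖_p` for `r ≠ 0`, which with `z = 1 / r` reads
`log ‖z / α + Y‖_q + log α < log ‖z + X‖_p` (`Lf_lt`).

The derivative of `log ‖z + X‖_p` is `G / (z G + 1)`, where
`G = E sp(z + X) / E (X sp(z + X))` and `sp t = sgn(t) |t|^c`. Hence the sign of the derivative of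
the difference of the two sides is that of `α G_X(z) - G_Y(z / α)`. This expression changes sign
exactly once, from positive to negative (`exists_crossing`), and the difference tends to `0` at both
`±∞`, so the difference is positive everywhere.

For the single sign change one uses that `G` solves the separable equation
`G' = c Q(G) / Q(z)`, `Q(t) = (t + a) (t - 1/a)`, whose first integral along `G` is explicit
(`Gf_log`). Substituting `α G_X(z)` into the first integral of the equation for `Y` gives the function
`Psi`, which vanishes exactly where `α G_X(z) = G_Y(z / α)` within the interval between the two
singularities of the `Y` side. The relation between `u` and `v` turns the sign of `Psi'` into that of
a polynomial in `z` and `G_X(z)` (`Psi_deriv_pos`). Between the singularities that sign is evident.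
To the right of them it follows from hyperbolic bounds on `G` (`Gf_bounds`) and concavity in `G`
(`P_neg`), and `Psi → 0` at infinity gives the sign of the comparison (`outer_lt`). The left side is
reduced to the right one by the reflection `z ↦ -z`, `a ↦ 1/a`, `b ↦ 1/b`. The assumption
`x1^p ≤ 1/q`, that is `d ≤ a²`, ensures the sign conditions used between the singularities and the
bound `4 κ² d ≤ 1` needed for `P_neg`, where `κ = (1/a - a) / (2 (1 - d))`. -/

noncomputable section

/-- The ℓ^r norm on ℝ². -/
def pnorm (r : ℝ) (z : ℝ × ℝ) : ℝ := (|z.1| ^ r + |z.2| ^ r) ^ (1 / r)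

/-- Apply a 2×2 real matrix, viewed as a linear operator ℝ² → ℝ², to a vector. -/
def app (A : Matrix (Fin 2) (Fin 2) ℝ) (z : ℝ × ℝ) : ℝ × ℝ :=
  (A 0 0 * z.1 + A 0 1 * z.2, A 1 0 * z.1 + A 1 1 * z.2)

/-- Operator norm from ℓ^p_2 to ℓ^q_2. -/
def opNorm (p q : ℝ) (A : Matrix (Fin 2) (Fin 2) ℝ) : ℝ :=
  sSup {c : ℝ | ∃ z : ℝ × ℝ, pnorm p z = 1 ∧ c = pnorm q (app A z)}

/-- Closed unit ball of L(ℓ^p_2, ℓ^q_2). -/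
def unitBall (p q : ℝ) : Set (Matrix (Fin 2) (Fin 2) ℝ) := {A | opNorm p q A ≤ 1}

/-- The rank-one operator u ⊗ v : z ↦ (u·z)·v. -/
def tensor (u v : ℝ × ℝ) : Matrix (Fin 2) (Fin 2) ℝ :=
  !![v.1 * u.1, v.1 * u.2; v.2 * u.1, v.2 * u.2]

/-- Signed power of a vector: (sgn z1 |z1|^r, sgn z2 |z2|^r). -/
def spow (z : ℝ × ℝ) (r : ℝ) : ℝ × ℝ :=
  (Real.sign z.1 * |z.1| ^ r, Real.sign z.2 * |z.2| ^ r)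

/-- Rotation: z^o = (−z2, z1). -/
def rot (z : ℝ × ℝ) : ℝ × ℝ := (-z.2, z.1)

section

open Filter Topology

/-! ### Elementary inequalities -/

/-- Convexity of `sinh` on the positive half-line. -/
lemma sinh_scale {l x : ℝ} (hl0 : 0 ≤ l) (hl1 : l ≤ 1) (hx : 0 ≤ x) :
    Real.sinh (l * x) ≤ l * Real.sinh x := by
  have hm : MonotoneOn (fun t => l * Real.sinh t - Real.sinh (l * t)) (Set.Ici 0) := by
    have hd : ∀ t : ℝ, HasDerivAt (fun t => l * Real.sinh t - Real.sinh (l * t))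
        (l * Real.cosh t - Real.cosh (l * t) * (l * 1)) t := fun t =>
      ((Real.hasDerivAt_sinh t).const_mul l).sub
        ((Real.hasDerivAt_sinh (l * t)).comp t ((hasDerivAt_id t).const_mul l))
    refine monotoneOn_of_deriv_nonneg (convex_Ici 0)
      (fun t _ => (hd t).continuousAt.continuousWithinAt)
      (fun t _ => (hd t).differentiableAt.differentiableWithinAt) ?_
    intro t ht
    rw [interior_Ici] at ht
    have ht' : (0:ℝ) < t := ht
    rw [(hd t).deriv]
    have : Real.cosh (l * t) ≤ Real.cosh t := by
      rw [Real.cosh_le_cosh, abs_of_nonneg (by positivity), abs_of_pos ht']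
      nlinarith
    nlinarith
  have := hm (Set.mem_Ici.2 le_rfl) (Set.mem_Ici.2 hx) hx
  simp only [mul_zero, Real.sinh_zero, sub_zero] at this
  linarith

/-- `c coth (c x) ≤ coth x`, with `w = exp (-2 x)`. -/
lemma pow_bound_one {c w : ℝ} (hc : 0 < c) (hc1 : c < 1) (hw : 0 < w) (hw1 : w < 1) :
    c * (1 + w ^ c) * (1 - w) ≤ (1 + w) * (1 - w ^ c) := by
  obtain ⟨x, hx⟩ : ∃ x, x = -(Real.log w) / 2 := ⟨_, rfl⟩
  have hx0 : 0 < x := by have := Real.log_neg hw hw1; linarith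
  have hwx : w = Real.exp (-x) * Real.exp (-x) := by
    rw [← Real.exp_add, hx, show -(-(Real.log w) / 2) + -(-(Real.log w) / 2) = Real.log w by ring,
      Real.exp_log hw]
  have hwc : w ^ c = Real.exp (-(c * x)) * Real.exp (-(c * x)) := by
    rw [Real.rpow_def_of_pos hw, ← Real.exp_add, hx]; congr 1; ring
  have key := sinh_scale (l := (1 - c) / (1 + c)) (x := (1 + c) * x)
    (div_nonneg (by linarith) (by linarith)) (by rw [div_le_one (by linarith)]; linarith)
    (by positivity)
  rw [show (1 - c) / (1 + c) * ((1 + c) * x) = x - c * x by field_simp,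
    show (1 + c) * x = x + c * x by ring, Real.sinh_sub, Real.sinh_add, div_mul_eq_mul_div,
    le_div_iff₀ (by linarith)] at key
  have key2 : c * (Real.sinh x * Real.cosh (c * x)) ≤ Real.cosh x * Real.sinh (c * x) := by
    linarith
  rw [Real.sinh_eq, Real.sinh_eq, Real.cosh_eq, Real.cosh_eq] at key2
  rw [hwc, hwx]
  have e1 : Real.exp x * Real.exp (-x) = 1 := by rw [← Real.exp_add]; simp
  have e2 : Real.exp (c * x) * Real.exp (-(c * x)) = 1 := by rw [← Real.exp_add]; simp
  have h1 := Real.exp_pos (-x)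
  have h2 := Real.exp_pos (-(c * x))
  generalize Real.exp (-x) = X at *
  generalize Real.exp (-(c * x)) = Y at *
  generalize Real.exp x = X' at *
  generalize Real.exp (c * x) = Y' at *
  have := mul_le_mul_of_nonneg_right key2 (show 0 ≤ 4 * (X * Y) by positivity)
  have l1 : c * ((X' - X) / 2 * ((Y' + Y) / 2)) * (4 * (X * Y))
      = c * ((X' * X - X * X) * (Y' * Y + Y * Y)) := by ring
  have l2 : (X' + X) / 2 * ((Y' - Y) / 2) * (4 * (X * Y))
      = (X' * X + X * X) * (Y' * Y - Y * Y) := by ring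
  rw [l1, l2, e1, e2] at this
  linarith

/-- `sinh (c x) ≤ c sinh x`, with `w = exp (-2 x)`. -/
lemma pow_bound_two {c w : ℝ} (hc : 0 < c) (hc1 : c < 1) (hw : 0 < w) (hw1 : w < 1) :
    w * (1 - w ^ c) ^ 2 ≤ c ^ 2 * w ^ c * (1 - w) ^ 2 := by
  obtain ⟨x, hx⟩ : ∃ x, x = -(Real.log w) / 2 := ⟨_, rfl⟩
  have hx0 : 0 < x := by have := Real.log_neg hw hw1; linarith
  have hwx : w = Real.exp (-x) * Real.exp (-x) := by
    rw [← Real.exp_add, hx, show -(-(Real.log w) / 2) + -(-(Real.log w) / 2) = Real.log w by ring,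
      Real.exp_log hw]
  have hwc : w ^ c = Real.exp (-(c * x)) * Real.exp (-(c * x)) := by
    rw [Real.rpow_def_of_pos hw, ← Real.exp_add, hx]; congr 1; ring
  have key := sinh_scale hc.le hc1.le hx0.le
  have k0 : 0 ≤ Real.sinh (c * x) := (Real.sinh_nonneg_iff).2 (by positivity)
  have key2 := pow_le_pow_left₀ k0 key 2
  rw [Real.sinh_eq, Real.sinh_eq] at key2
  rw [hwc, hwx]
  have e1 : Real.exp x * Real.exp (-x) = 1 := by rw [← Real.exp_add]; simp
  have e2 : Real.exp (c * x) * Real.exp (-(c * x)) = 1 := by rw [← Real.exp_add]; simp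
  have h1 := Real.exp_pos (-x)
  have h2 := Real.exp_pos (-(c * x))
  generalize Real.exp (-x) = X at *
  generalize Real.exp (-(c * x)) = Y at *
  generalize Real.exp x = X' at *
  generalize Real.exp (c * x) = Y' at *
  have := mul_le_mul_of_nonneg_right key2 (show 0 ≤ 4 * (X * Y) ^ 2 by positivity)
  have l1 : ((Y' - Y) / 2) ^ 2 * (4 * (X * Y) ^ 2) = X * X * (Y' * Y - Y * Y) ^ 2 := by ring
  have l2 : (c * ((X' - X) / 2)) ^ 2 * (4 * (X * Y) ^ 2)
      = c ^ 2 * (Y * Y) * (X' * X - X * X) ^ 2 := by ring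
  rw [l1, l2, e1, e2] at this
  linarith

/-- The value at `y₀` in the proof of `P_neg`, up to a negative factor, in the variables
`n = (1 - c) (1 - d)`, `e = c d`, `m = 4 κ² d`, `ζ = 2 κ d z`. As a polynomial in `m` it has the
form `-A m² + B m - C`, so that it equals `m` times its value at `m = 1` plus
`(1 - m) (A m - C)`. -/
lemma endpoint_poly {n e m ζ : ℝ} (hn0 : 0 < n) (hn1 : n < 1) (he0 : 0 < e)
    (hm0 : 0 < m) (hm1 : m ≤ 1) (hζ : 1 < ζ) :
    n * m * ζ ^ 2 / 2 - n ^ 2 * m ^ 2 * (ζ + 1) / 4 - (1 + e) * ζ ^ 2 + n * m * ζ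
      + (1 - n) * (ζ * m - n * m ^ 2 / 2) + e * (n - e) * ζ * m + e * (1 + e - n) * m < 0 := by
  -- `ζ - 1` divides the value at `m = 1`
  have h1 : (ζ - 1) * ((n / 2 - 1 - e) * ζ - (n ^ 2 / 4 - n / 2 + e + e ^ 2 - e * n)) < 0 := by
    apply mul_neg_of_pos_of_neg (by linarith)
    have : (n / 2 - 1 - e) * (ζ - 1) < 0 := mul_neg_of_neg_of_pos (by linarith) (by linarith)
    nlinarith [sq_nonneg (1 + e - n / 2)]
  have h2 : m * (n ^ 2 * (ζ + 1) / 4 + (1 - n) * n / 2) - (1 + e) * ζ ^ 2 ≤ 0 := by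
    have a1 : n ^ 2 * (ζ + 1) / 4 + (1 - n) * n / 2 ≤ ζ ^ 2 := by
      have : n ^ 2 ≤ n := by nlinarith
      have : n ^ 2 * ζ ≤ ζ := by nlinarith
      nlinarith
    have a0 : 0 ≤ n ^ 2 * (ζ + 1) / 4 + (1 - n) * n / 2 := by
      have : 0 ≤ (1 - n) * n := mul_nonneg (by linarith) hn0.le
      positivity
    nlinarith [sq_nonneg ζ]
  have h3 := mul_nonpos_of_nonneg_of_nonpos (sub_nonneg.2 hm1) h2
  have h4 := mul_neg_of_pos_of_neg hm0 h1
  nlinarith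

/-- Positivity of the polynomial that governs the sign of the derivative of `Psi`, to the right of
all singularities. The hypotheses on `y` are those that `Gf_bounds` provides for `y = Gf c a z`,
with `S = (1/a - a) / 2`. -/
lemma P_neg {c d κ S y z : ℝ} (hc : 0 < c) (hcd : c < d) (hd : d < 1)
    (hκ : 4 * κ ^ 2 * d ≤ 1) (hS : S = κ * (1 - d)) (hz : 0 < z) (hzy : z ≤ y)
    (hQ : 0 < z ^ 2 - 2 * S * z - 1) (hy : c * y ≤ z - (1 - c) * S)
    (hN : z ^ 2 - 2 * S * z - 1 ≤ c ^ 2 * (y ^ 2 - 2 * S * y - 1)) :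
    c * (y ^ 2 - 2 * S * y - 1) * (2 * κ * z - 1 / d)
      < (z ^ 2 - 2 * S * z - 1) * (2 * κ * y + 1) := by
  have hd0 : 0 < d := hc.trans hcd
  have hd' : 0 < 1 / d := by positivity
  have hN0 : 0 < y ^ 2 - 2 * S * y - 1 := by
    by_contra! h
    nlinarith [sq_nonneg c]
  rcases le_or_gt κ 0 with hk | hk
  · have hneg : 2 * κ * z ≤ 0 := by nlinarith
    have h1 : 0 < 1 / d + c - 2 * κ * z + 2 * κ * (c * y) := by
      have : 2 * κ * (z - (1 - c) * S) ≤ 2 * κ * (c * y) := by nlinarith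
      have h3 : 2 * κ * ((1 - c) * S) < 1 / d := by
        rw [lt_div_iff₀ hd0, hS]
        have : (1 - c) * (1 - d) ≤ 1 := by nlinarith
        have : 0 ≤ (1 - c) * (1 - d) := mul_nonneg (by linarith) (by linarith)
        nlinarith [sq_nonneg κ]
      linarith
    have h2 := mul_le_mul_of_nonneg_right hN (show 0 ≤ 1 / d - 2 * κ * z by linarith)
    have h3 := mul_pos hQ h1
    generalize y ^ 2 - 2 * S * y - 1 = N at *
    generalize z ^ 2 - 2 * S * z - 1 = Q at *
    have : 0 < c * (Q * (2 * κ * y + 1) - c * N * (2 * κ * z - 1 / d)) := by nlinarith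
    have := (mul_pos_iff_of_pos_left hc).1 this
    linarith
  rcases le_or_gt (2 * κ * z) (1 / d) with h | h
  · have : c * (y ^ 2 - 2 * S * y - 1) * (2 * κ * z - 1 / d) ≤ 0 :=
      mul_nonpos_of_nonneg_of_nonpos (by positivity) (by linarith)
    have h2 : 0 < 2 * κ * y + 1 := by
      have : 0 < y := by linarith
      positivity
    have := mul_pos hQ h2
    linarith
  -- the difference is concave in `y`, hence it suffices to treat `y = z` and the largest value `y₀`
  -- of `y` compatible with `hy`
  obtain ⟨y₀, hy₀⟩ : ∃ y₀, y₀ = (z - (1 - c) * S) / c := ⟨_, rfl⟩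
  have hcy₀ : c * y₀ = z - (1 - c) * S := by rw [hy₀]; field_simp
  have hyy₀ : y ≤ y₀ := by
    rw [hy₀, le_div_iff₀ hc]; linarith
  have E0 : 0 < (z ^ 2 - 2 * S * z - 1) * (2 * κ * y₀ + 1)
      - c * (y₀ ^ 2 - 2 * S * y₀ - 1) * (2 * κ * z - 1 / d) := by
    have hζ : 1 < 2 * κ * d * z := by
      rw [div_lt_iff₀ hd0] at h; linarith
    have := endpoint_poly (n := (1 - c) * (1 - d)) (e := c * d) (m := 4 * κ ^ 2 * d)
      (ζ := 2 * κ * d * z) (mul_pos (by linarith) (by linarith)) (by nlinarith) (by positivity)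
      (by positivity) hκ hζ
    have id : (c * d ^ 2 * (4 * κ ^ 2 * d)) * ((z ^ 2 - 2 * S * z - 1) * (2 * κ * y₀ + 1)
      - c * (y₀ ^ 2 - 2 * S * y₀ - 1) * (2 * κ * z - 1 / d)) = -(((1 - c) * (1 - d)) * (4 * κ ^ 2 * d) * (2 * κ * d * z) ^ 2 / 2 - ((1 - c) * (1 - d)) ^ 2 * (4 * κ ^ 2 * d) ^ 2 * ((2 * κ * d * z) + 1) / 4 - (1 + (c * d)) * (2 * κ * d * z) ^ 2 + ((1 - c) * (1 - d)) * (4 * κ ^ 2 * d) * (2 * κ * d * z)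
      + (1 - ((1 - c) * (1 - d))) * ((2 * κ * d * z) * (4 * κ ^ 2 * d) - ((1 - c) * (1 - d)) * (4 * κ ^ 2 * d) ^ 2 / 2) + (c * d) * (((1 - c) * (1 - d)) - (c * d)) * (2 * κ * d * z) * (4 * κ ^ 2 * d) + (c * d) * (1 + (c * d) - ((1 - c) * (1 - d))) * (4 * κ ^ 2 * d)) := by
      rw [hy₀, hS]; field_simp; ring
    have h5 : 0 < c * d ^ 2 * (4 * κ ^ 2 * d) := by positivity
    refine (mul_pos_iff_of_pos_left h5).1 ?_
    rw [id]; linarith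
  have Ez : 0 < (z ^ 2 - 2 * S * z - 1) * (2 * κ * z + 1)
      - c * (z ^ 2 - 2 * S * z - 1) * (2 * κ * z - 1 / d) := by
    have : 0 < (2 * κ * z + 1) - c * (2 * κ * z - 1 / d) := by
      have : c * (2 * κ * z - 1 / d) < 1 * (2 * κ * z - 1 / d) :=
        mul_lt_mul_of_pos_right (by linarith) (by linarith)
      linarith
    have := mul_pos hQ this
    linarith
  rcases hzy.eq_or_lt with rfl | hzy
  · linarith
  have hpos : 0 < y₀ - z := by linarith
  have cv : 0 ≤ c * (2 * κ * z - 1 / d) * ((y₀ - z) * (y - z) * (y₀ - y)) := by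
    have : 0 ≤ y₀ - y := by linarith
    have : 0 < y - z := by linarith
    have : 0 < 2 * κ * z - 1 / d := by linarith
    positivity
  have h6 := mul_nonneg (sub_nonneg.2 hyy₀) Ez.le
  have h7 := mul_pos (sub_pos.2 hzy) E0
  have : 0 < (y₀ - z) * ((z ^ 2 - 2 * S * z - 1) * (2 * κ * y + 1) - c * (y ^ 2 - 2 * S * y - 1) * (2 * κ * z - 1 / d)) := by
    refine lt_of_lt_of_eq (add_pos_of_pos_of_nonneg (add_pos_of_pos_of_nonneg h7 h6) cv) ?_
    ring
  have := (mul_pos_iff_of_pos_left hpos).1 this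
  linarith

/-! ### The norm of a two-valued variable and its logarithmic derivative -/

/-- The odd power function `sgn(t) |t|^c`. -/
def sp (c t : ℝ) : ℝ := max t 0 ^ c - max (-t) 0 ^ c

lemma sp_of_nonneg {c t : ℝ} (hc : 0 < c) (ht : 0 ≤ t) : sp c t = t ^ c := by
  rw [sp, max_eq_left ht, max_eq_right (by linarith), Real.zero_rpow hc.ne', sub_zero]

lemma sp_of_nonpos {c t : ℝ} (hc : 0 < c) (ht : t ≤ 0) : sp c t = -(-t) ^ c := by
  rw [sp, max_eq_right ht, max_eq_left (by linarith), Real.zero_rpow hc.ne', zero_sub]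

lemma sp_neg (c t : ℝ) : sp c (-t) = -sp c t := by
  rw [sp, sp, neg_neg]; ring

lemma sp_pos {c t : ℝ} (hc : 0 < c) (ht : 0 < t) : 0 < sp c t := by
  rw [sp_of_nonneg hc ht.le]; positivity

lemma sp_nonneg {c t : ℝ} (hc : 0 < c) (ht : 0 ≤ t) : 0 ≤ sp c t := by
  rw [sp_of_nonneg hc ht]; positivity

lemma sp_strictMono {c : ℝ} (hc : 0 < c) : StrictMono (sp c) := by
  have hp : ∀ s t : ℝ, 0 ≤ s → s < t → sp c s < sp c t := fun s t hs hst => by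
    rw [sp_of_nonneg hc hs, sp_of_nonneg hc (hs.trans hst.le)]
    exact Real.rpow_lt_rpow hs hst hc
  intro s t hst
  rcases le_or_gt 0 s with h | h
  · exact hp s t h hst
  rcases le_or_gt t 0 with h' | h'
  · have := hp (-t) (-s) (by linarith) (by linarith)
    rw [sp_neg, sp_neg] at this; linarith
  · have h1 := sp_pos hc h'
    have h2 := sp_pos hc (neg_pos.2 h)
    rw [sp_neg] at h2; linarith

lemma sp_continuous {c : ℝ} (hc : 0 < c) : Continuous (sp c) := by
  unfold sp
  refine Continuous.sub ?_ ?_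
  · exact (continuous_id.max continuous_const).rpow_const fun _ => Or.inr hc.le
  · exact (continuous_neg.max continuous_const).rpow_const fun _ => Or.inr hc.le

lemma sp_hasDerivAt {c t : ℝ} (hc : 0 < c) (ht : t ≠ 0) :
    HasDerivAt (sp c) (c * sp c t / t) t := by
  have hp : ∀ s : ℝ, 0 < s → HasDerivAt (sp c) (c * sp c s / s) s := fun s hs => by
    have h := Real.hasDerivAt_rpow_const (p := c) (Or.inl hs.ne')
    rw [sp_of_nonneg hc hs.le, mul_div_assoc, ← Real.rpow_sub_one hs.ne']
    refine h.congr_of_eventuallyEq ?_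
    filter_upwards [lt_mem_nhds hs] with x hx
    exact sp_of_nonneg hc hx.le
  rcases lt_or_gt_of_ne ht with h | h
  · have h1 := (hp (-t) (by linarith)).comp t (hasDerivAt_neg t)
    have h2 := h1.neg
    have e : (-(sp c ∘ fun x => -x)) = sp c := by
      funext x; simp [sp_neg]
    have h3 : HasDerivAt (sp c) _ t := e ▸ h2
    convert h3 using 1
    rw [sp_neg]; field_simp
  · exact hp t h

lemma abs_rpow_eq {c : ℝ} (hc : 0 < c) (t : ℝ) : |t| ^ (c + 1) = t * sp c t := by
  rcases le_total 0 t with h | h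
  · rw [abs_of_nonneg h, sp_of_nonneg hc h, Real.rpow_add_one' h (by linarith), mul_comm]
  · rw [abs_of_nonpos h, sp_of_nonpos hc h, Real.rpow_add_one' (by linarith) (by linarith)]
    ring

lemma abs_rpow_hasDerivAt {c : ℝ} (hc : 0 < c) (t : ℝ) :
    HasDerivAt (fun t : ℝ => |t| ^ (c + 1)) ((c + 1) * sp c t) t := by
  have h := hasDerivAt_abs_rpow t (p := c + 1) (by linarith)
  convert h using 1
  rcases eq_or_ne t 0 with rfl | h0
  · simp [sp]
  have h1 := abs_rpow_eq hc t
  have h2 : |t| ^ (c + 1) = |t| ^ (c + 1 - 2) * t ^ 2 := by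
    rw [← sq_abs, ← Real.rpow_natCast |t| 2, ← Real.rpow_add (abs_pos.2 h0)]
    norm_num
  have h3 : t * (|t| ^ (c + 1 - 2) * t) = t * sp c t := by rw [← h1, h2]; ring
  rw [mul_assoc, mul_left_cancel₀ h0 h3]

/-- For the mean zero, variance one variable `X` taking the value `a` with probability
`1 / (1 + a²)` and `-1/a` otherwise, this is the ratio of `E [sp c (z + X)]` and
`E [X * sp c (z + X)]`. -/
def Gf (c a z : ℝ) : ℝ :=
  (sp c (z + a) + a ^ 2 * sp c (z - a⁻¹)) / (a * (sp c (z + a) - sp c (z - a⁻¹)))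

/-- The logarithm of the `L^(c+1)` norm of `z + X`, with `X` as in `Gf`. -/
def Lf (c a z : ℝ) : ℝ :=
  1 / (c + 1) * Real.log ((|z + a| ^ (c + 1) + a ^ 2 * |z - a⁻¹| ^ (c + 1)) / (1 + a ^ 2))

lemma sp_gap {c a : ℝ} (hc : 0 < c) (ha : 0 < a) (z : ℝ) :
    0 < sp c (z + a) - sp c (z - a⁻¹) := by
  have : 0 < a⁻¹ := by positivity
  exact sub_pos.2 (sp_strictMono hc (by linarith))

lemma Gf_add {c a : ℝ} (hc : 0 < c) (ha : 0 < a) (z : ℝ) :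
    Gf c a z + a = (1 + a ^ 2) * sp c (z + a) / (a * (sp c (z + a) - sp c (z - a⁻¹))) := by
  have := sp_gap hc ha z
  rw [Gf]
  generalize sp c (z + a) = A at *
  generalize sp c (z - a⁻¹) = B at *
  field_simp; ring

lemma Gf_sub {c a : ℝ} (hc : 0 < c) (ha : 0 < a) (z : ℝ) :
    Gf c a z - a⁻¹ = (1 + a ^ 2) * sp c (z - a⁻¹) / (a * (sp c (z + a) - sp c (z - a⁻¹))) := by
  have := sp_gap hc ha z
  rw [Gf]
  generalize sp c (z + a) = A at *
  generalize sp c (z - a⁻¹) = B at *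
  field_simp; ring

/-- Replacing `z` by `-z` amounts to replacing `a` by `1/a`. -/
lemma Gf_neg {c a : ℝ} (ha : 0 < a) (z : ℝ) : Gf c a (-z) = -Gf c a⁻¹ z := by
  rw [Gf, Gf, show -z + a = -(z - a) by ring, show -z - a⁻¹ = -(z + a⁻¹) by ring, sp_neg, sp_neg,
    inv_inv]
  rw [← neg_div]
  have e : a * (-sp c (z - a) - -sp c (z + a⁻¹)) = a ^ 2 * (a⁻¹ * (sp c (z + a⁻¹) - sp c (z - a))) := by
    field_simp; ring
  rw [e, show -sp c (z - a) + a ^ 2 * -sp c (z + a⁻¹)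
    = a ^ 2 * -(sp c (z + a⁻¹) + a⁻¹ ^ 2 * sp c (z - a)) by field_simp; ring,
    mul_div_mul_left _ _ (by positivity)]

lemma Lf_neg {c a : ℝ} (ha : 0 < a) (z : ℝ) : Lf c a (-z) = Lf c a⁻¹ z := by
  rw [Lf, Lf, show -z + a = -(z - a) by ring, show -z - a⁻¹ = -(z + a⁻¹) by ring, abs_neg, abs_neg,
    inv_inv]
  congr 2
  field_simp
  ring

lemma Gf_continuous {c a : ℝ} (hc : 0 < c) (ha : 0 < a) : Continuous (Gf c a) := by
  unfold Gf
  have h := sp_continuous hc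
  have h1 : Continuous fun z => sp c (z + a) := h.comp (by fun_prop)
  have h2 : Continuous fun z => sp c (z - a⁻¹) := h.comp (by fun_prop)
  refine Continuous.div (h1.add (h2.const_mul _)) ((h1.sub h2).const_mul _) fun z => ?_
  have := sp_gap hc ha z
  positivity

lemma Gf_gt {c a z : ℝ} (hc : 0 < c) (ha : 0 < a) (hz : -a < z) : -a < Gf c a z := by
  have h := Gf_add hc ha z
  have h1 := sp_gap hc ha z
  have h2 := sp_pos hc (show 0 < z + a by linarith)
  have : 0 < Gf c a z + a := by rw [h]; positivity
  linarith

lemma Gf_ge_inv {c a z : ℝ} (hc : 0 < c) (ha : 0 < a) (hz : a⁻¹ ≤ z) : a⁻¹ ≤ Gf c a z := by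
  have h := Gf_sub hc ha z
  have h1 := sp_gap hc ha z
  have h2 := sp_nonneg hc (show 0 ≤ z - a⁻¹ by linarith)
  have : 0 ≤ Gf c a z - a⁻¹ := by rw [h]; positivity
  linarith

lemma Gf_gt_inv {c a z : ℝ} (hc : 0 < c) (ha : 0 < a) (hz : a⁻¹ < z) : a⁻¹ < Gf c a z := by
  have h := Gf_sub hc ha z
  have h1 := sp_gap hc ha z
  have h2 := sp_pos hc (show 0 < z - a⁻¹ by linarith)
  have : 0 < Gf c a z - a⁻¹ := by rw [h]; positivity
  linarith

lemma Gf_lt_inv {c a z : ℝ} (hc : 0 < c) (ha : 0 < a) (hz : z < a⁻¹) : Gf c a z < a⁻¹ := by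
  have := Gf_gt (a := a⁻¹) (z := -z) hc (by positivity) (by linarith)
  rw [Gf_neg (by positivity), inv_inv] at this
  linarith

lemma Gf_le_inv {c a z : ℝ} (hc : 0 < c) (ha : 0 < a) (hz : z ≤ a⁻¹) : Gf c a z ≤ a⁻¹ := by
  rcases hz.eq_or_lt with rfl | h
  · have := Gf_sub hc ha a⁻¹
    rw [sub_self, show sp c 0 = 0 by simp [sp]] at this
    simp at this; linarith
  · exact (Gf_lt_inv hc ha h).le

/-- The product `(G + a) (G - 1/a)`. -/
lemma Gf_quad {c a : ℝ} (hc : 0 < c) (ha : 0 < a) (z : ℝ) :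
    (Gf c a z + a) * (Gf c a z - a⁻¹) = (1 + a ^ 2) ^ 2 * (sp c (z + a) * sp c (z - a⁻¹)) /
      (a * (sp c (z + a) - sp c (z - a⁻¹))) ^ 2 := by
  rw [Gf_add hc ha, Gf_sub hc ha, div_mul_div_comm]; ring_nf

/-- `G` solves the separable equation `G' = c (G + a) (G - 1/a) / ((z + a) (z - 1/a))`. -/
lemma Gf_hasDerivAt {c a z : ℝ} (hc : 0 < c) (ha : 0 < a) (h1 : z + a ≠ 0) (h2 : z - a⁻¹ ≠ 0) :
    HasDerivAt (Gf c a)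
      (c * ((Gf c a z + a) * (Gf c a z - a⁻¹)) / ((z + a) * (z - a⁻¹))) z := by
  have hA : HasDerivAt (fun z => sp c (z + a)) (c * sp c (z + a) / (z + a)) z := by
    exact (sp_hasDerivAt hc h1).comp_add_const z a
  have hB : HasDerivAt (fun z => sp c (z - a⁻¹)) (c * sp c (z - a⁻¹) / (z - a⁻¹)) z := by
    exact (sp_hasDerivAt hc h2).comp_sub_const z a⁻¹
  have hg := sp_gap hc ha z
  have h := (hA.add (hB.const_mul (a ^ 2))).div ((hA.sub hB).const_mul a) (by positivity)
  have h' : HasDerivAt (Gf c a) _ z := h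
  convert h' using 1
  rw [Gf_quad hc ha]
  simp only [Pi.add_apply, Pi.sub_apply]
  have hgap : a * ((z + a) - (z - a⁻¹)) = 1 + a ^ 2 := by field_simp; ring
  clear h h' hA hB
  generalize sp c (z + a) = A at *
  generalize sp c (z - a⁻¹) = B at *
  generalize z + a = n at *
  generalize z - a⁻¹ = m at *
  have hne : A - B ≠ 0 := hg.ne'
  have key : (c * A / n + a ^ 2 * (c * B / m)) * (a * (A - B))
      - (A + a ^ 2 * B) * (a * (c * A / n - c * B / m))
      = c * ((1 + a ^ 2) * (A * B)) * (a * (n - m)) / (n * m) := by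
    field_simp; ring
  rw [key, hgap]
  field_simp

/-- First integral of the equation in `Gf_hasDerivAt`. -/
lemma Gf_log {c a z : ℝ} (hc : 0 < c) (ha : 0 < a) (h1 : -a < z) (h2 : z ≠ a⁻¹) :
    Real.log ((Gf c a z - a⁻¹) / (Gf c a z + a)) = c * Real.log ((z - a⁻¹) / (z + a)) := by
  have h1' : 0 < z + a := by linarith
  have hA := sp_pos hc h1'
  have hg := sp_gap hc ha z
  have e : (Gf c a z - a⁻¹) / (Gf c a z + a) = sp c (z - a⁻¹) / sp c (z + a) := by
    rw [Gf_add hc ha, Gf_sub hc ha, div_div_div_cancel_right₀ (by positivity),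
      mul_div_mul_left _ _ (by positivity)]
  have hs : ∀ t : ℝ, t ≠ 0 → Real.log (sp c t) = c * Real.log t := by
    intro t ht
    rcases lt_or_gt_of_ne ht with h | h
    · rw [sp_of_nonpos hc h.le, Real.log_neg_eq_log, Real.log_rpow (by linarith),
        Real.log_neg_eq_log]
    · rw [sp_of_nonneg hc h.le, Real.log_rpow h]
  have h2' : z - a⁻¹ ≠ 0 := sub_ne_zero.2 h2
  have hB : sp c (z - a⁻¹) ≠ 0 := by
    have : sp c 0 = 0 := by simp [sp]
    rw [← this]; exact (sp_strictMono hc).injective.ne h2'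
  rw [e, Real.log_div hB hA.ne', hs _ h2', hs _ h1'.ne', Real.log_div h2' h1'.ne']
  ring

/-- Bounds on `G` to the right of its singularity `1/a`. -/
lemma Gf_bounds {c a z : ℝ} (hc : 0 < c) (hc1 : c < 1) (ha : 0 < a) (hz : a⁻¹ < z) :
    z ≤ Gf c a z ∧ c * Gf c a z ≤ z - (1 - c) * ((a⁻¹ - a) / 2) ∧
      (z + a) * (z - a⁻¹) ≤ c ^ 2 * ((Gf c a z + a) * (Gf c a z - a⁻¹)) := by
  have hai : 0 < a⁻¹ := by positivity
  have hn : 0 < z + a := by linarith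
  have hm : 0 < z - a⁻¹ := by linarith
  obtain ⟨w, hw⟩ : ∃ w, w = (z - a⁻¹) / (z + a) := ⟨_, rfl⟩
  have hw0 : 0 < w := by rw [hw]; positivity
  have hw1 : w < 1 := by rw [hw, div_lt_one hn]; linarith
  have hwc1 : w ^ c < 1 := Real.rpow_lt_one hw0.le hw1 hc
  have hwc : w ≤ w ^ c := by
    conv_lhs => rw [← Real.rpow_one w]
    exact Real.rpow_le_rpow_of_exponent_ge hw0 hw1.le hc1.le
  have b1 := pow_bound_one hc hc1 hw0 hw1
  have b2 := pow_bound_two hc hc1 hw0 hw1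
  have hA : sp c (z + a) = (z + a) ^ c := sp_of_nonneg hc hn.le
  have hB : sp c (z - a⁻¹) = w ^ c * (z + a) ^ c := by
    rw [sp_of_nonneg hc hm.le, ← Real.mul_rpow hw0.le hn.le, hw, div_mul_cancel₀ _ hn.ne']
  have hAp : 0 < (z + a) ^ c := by positivity
  have hG1 : Gf c a z + a = (1 + a ^ 2) / (a * (1 - w ^ c)) := by
    rw [Gf_add hc ha, hA, hB]
    have : 1 - w ^ c ≠ 0 := by linarith
    have : (z + a) ^ c - w ^ c * (z + a) ^ c ≠ 0 := by
      rw [← one_sub_mul]; positivity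
    field_simp
  have hG2 : Gf c a z - a⁻¹ = (1 + a ^ 2) * w ^ c / (a * (1 - w ^ c)) := by
    have e : Gf c a z - a⁻¹ = (Gf c a z + a) - (a + a⁻¹) := by ring
    rw [e, hG1]
    have : 1 - w ^ c ≠ 0 := by linarith
    field_simp; ring
  have hz1 : z + a = (1 + a ^ 2) / (a * (1 - w)) := by
    have : 1 - w = (a + a⁻¹) / (z + a) := by rw [hw]; field_simp; ring
    rw [this]; field_simp; ring
  have hz2 : z - a⁻¹ = (1 + a ^ 2) * w / (a * (1 - w)) := by
    have e : z - a⁻¹ = (z + a) - (a + a⁻¹) := by ring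
    rw [e, hz1]
    have : 1 - w ≠ 0 := by linarith
    field_simp; ring
  have p1 : 0 < 1 - w := by linarith
  have p2 : 0 < 1 - w ^ c := by linarith
  generalize w ^ c = W at *
  refine ⟨?_, ?_, ?_⟩
  · have : z + a ≤ Gf c a z + a := by
      rw [hz1, hG1]; gcongr
    linarith
  · have e1 : c * Gf c a z - (z - (1 - c) * ((a⁻¹ - a) / 2))
        = c * ((Gf c a z + a) + (Gf c a z - a⁻¹)) / 2 - ((z + a) + (z - a⁻¹)) / 2 := by ring
    have e2 : c * ((Gf c a z + a) + (Gf c a z - a⁻¹)) / 2 - ((z + a) + (z - a⁻¹)) / 2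
        = (1 + a ^ 2) / (2 * a * ((1 - w) * (1 - W))) *
          (c * (1 + W) * (1 - w) - (1 + w) * (1 - W)) := by
      rw [hG1, hG2, hz1, hz2]; field_simp
    have := mul_nonpos_of_nonneg_of_nonpos
      (show 0 ≤ (1 + a ^ 2) / (2 * a * ((1 - w) * (1 - W))) by positivity) (sub_nonpos.2 b1)
    linarith
  · rw [hG1, hG2, hz1, hz2]
    have e : c ^ 2 * ((1 + a ^ 2) / (a * (1 - W)) * ((1 + a ^ 2) * W / (a * (1 - W))))
        - (1 + a ^ 2) / (a * (1 - w)) * ((1 + a ^ 2) * w / (a * (1 - w)))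
        = (1 + a ^ 2) ^ 2 / (a * ((1 - w) * (1 - W))) ^ 2 *
          (c ^ 2 * W * (1 - w) ^ 2 - w * (1 - W) ^ 2) := by
      field_simp
    have := mul_nonneg
      (show 0 ≤ (1 + a ^ 2) ^ 2 / (a * ((1 - w) * (1 - W))) ^ 2 by positivity) (sub_nonneg.2 b2)
    linarith

lemma Lf_arg_pos {c a : ℝ} (ha : 0 < a) (z : ℝ) :
    0 < |z + a| ^ (c + 1) + a ^ 2 * |z - a⁻¹| ^ (c + 1) := by
  have hai : 0 < a⁻¹ := by positivity
  rcases eq_or_ne (z + a) 0 with h | h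
  · have h' : z - a⁻¹ ≠ 0 := by intro h2; linarith
    have := abs_pos.2 h'
    have h3 : 0 ≤ |z + a| ^ (c + 1) := by positivity
    positivity
  · have := abs_pos.2 h
    positivity

lemma zG_pos {c a : ℝ} (hc : 0 < c) (ha : 0 < a) (z : ℝ) : 0 < z * Gf c a z + 1 := by
  have h := Lf_arg_pos (c := c) ha z
  have hg := sp_gap hc ha z
  have e : z * Gf c a z + 1 = (|z + a| ^ (c + 1) + a ^ 2 * |z - a⁻¹| ^ (c + 1)) /
      (a * (sp c (z + a) - sp c (z - a⁻¹))) := by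
    rw [abs_rpow_eq hc, abs_rpow_eq hc, Gf]
    have e2 : a ^ 2 * ((z - a⁻¹) * sp c (z - a⁻¹)) = (a ^ 2 * z - a) * sp c (z - a⁻¹) := by
      field_simp
    rw [e2, ← mul_div_assoc, div_add_one (by positivity)]
    ring
  rw [e]; positivity

/-- The logarithmic derivative of the norm depends on `z` and `Gf c a z` only. -/
lemma Lf_hasDerivAt {c a : ℝ} (hc : 0 < c) (ha : 0 < a) (z : ℝ) :
    HasDerivAt (Lf c a) (Gf c a z / (z * Gf c a z + 1)) z := by
  have h := Lf_arg_pos (c := c) ha z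
  have hg := sp_gap hc ha z
  have hA : HasDerivAt (fun z => |z + a| ^ (c + 1)) ((c + 1) * sp c (z + a)) z := by
    exact (abs_rpow_hasDerivAt hc (z + a)).comp_add_const z a
  have hB : HasDerivAt (fun z => |z - a⁻¹| ^ (c + 1)) ((c + 1) * sp c (z - a⁻¹)) z := by
    exact (abs_rpow_hasDerivAt hc (z - a⁻¹)).comp_sub_const z a⁻¹
  have h1 := (((hA.add (hB.const_mul (a ^ 2))).div_const (1 + a ^ 2)).log
    (div_pos h (by positivity)).ne').const_mul (1 / (c + 1))
  have h2 : HasDerivAt (Lf c a) _ z := h1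
  convert h2 using 1
  have hz := zG_pos hc ha z
  have e : z * Gf c a z + 1 = (|z + a| ^ (c + 1) + a ^ 2 * |z - a⁻¹| ^ (c + 1)) /
      (a * (sp c (z + a) - sp c (z - a⁻¹))) := by
    rw [abs_rpow_eq hc, abs_rpow_eq hc, Gf]
    have e2 : a ^ 2 * ((z - a⁻¹) * sp c (z - a⁻¹)) = (a ^ 2 * z - a) * sp c (z - a⁻¹) := by
      field_simp
    rw [e2, ← mul_div_assoc, div_add_one (by positivity)]
    ring
  rw [e, Gf]
  simp only [Pi.add_apply]
  generalize |z + a| ^ (c + 1) + a ^ 2 * |z - a⁻¹| ^ (c + 1) = N at *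
  generalize sp c (z + a) - sp c (z - a⁻¹) = M at *
  field_simp

/-- Passing from `z = 1 / r` to `r`. -/
lemma Lf_scale {c a r : ℝ} (hc : 0 < c) (ha : 0 < a) (hr : r ≠ 0) :
    Lf c a r⁻¹ = 1 / (c + 1) * Real.log ((|1 + a * r| ^ (c + 1)
      + a ^ 2 * |1 - a⁻¹ * r| ^ (c + 1)) / (1 + a ^ 2)) - Real.log |r| := by
  have hr' : 0 < |r| := abs_pos.2 hr
  have e1 : |1 + a * r| = |r| * |r⁻¹ + a| := by
    rw [← abs_mul]; congr 1; field_simp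
  have e2 : |1 - a⁻¹ * r| = |r| * |r⁻¹ - a⁻¹| := by
    rw [← abs_mul]; congr 1; field_simp
  have h := Lf_arg_pos (c := c) ha r⁻¹
  rw [e1, e2, Real.mul_rpow hr'.le (abs_nonneg _), Real.mul_rpow hr'.le (abs_nonneg _),
    show (|r| ^ (c + 1) * |r⁻¹ + a| ^ (c + 1) + a ^ 2 * (|r| ^ (c + 1) * |r⁻¹ - a⁻¹| ^ (c + 1)))
      / (1 + a ^ 2) = |r| ^ (c + 1) * ((|r⁻¹ + a| ^ (c + 1) + a ^ 2 * |r⁻¹ - a⁻¹| ^ (c + 1))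
      / (1 + a ^ 2)) by ring, Real.log_mul (by positivity) (by positivity), Real.log_rpow hr', Lf]
  field_simp
  ring

/-- `Lf c a z` is asymptotic to `log z`, with an error tending to `0`. -/
lemma Lf_tendsto {c a : ℝ} (hc : 0 < c) (ha : 0 < a) :
    Tendsto (fun z => Lf c a z - Real.log z) atTop (𝓝 0) := by
  have h1 : ContinuousAt (fun r : ℝ => 1 / (c + 1) * Real.log ((|1 + a * r| ^ (c + 1)
      + a ^ 2 * |1 - a⁻¹ * r| ^ (c + 1)) / (1 + a ^ 2))) 0 := by
    have k1 : ContinuousAt (fun r : ℝ => |1 + a * r| ^ (c + 1)) 0 :=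
      ContinuousAt.rpow_const (by fun_prop) (Or.inr (by linarith))
    have k2 : ContinuousAt (fun r : ℝ => |1 - a⁻¹ * r| ^ (c + 1)) 0 :=
      ContinuousAt.rpow_const (by fun_prop) (Or.inr (by linarith))
    refine ContinuousAt.mul continuousAt_const (ContinuousAt.log
      ((k1.add (continuousAt_const.mul k2)).div_const _) ?_)
    simp; positivity
  have h2 := h1.tendsto.comp tendsto_inv_atTop_zero
  have h3 : 1 / (c + 1) * Real.log ((|1 + a * 0| ^ (c + 1)
      + a ^ 2 * |1 - a⁻¹ * 0| ^ (c + 1)) / (1 + a ^ 2)) = 0 := by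
    have : (1 + a ^ 2) / (1 + a ^ 2) = 1 := div_self (by positivity)
    simp [this]
  rw [h3] at h2
  refine h2.congr' ?_
  filter_upwards [eventually_gt_atTop 0] with z hz
  have h4 := Lf_scale hc ha (inv_ne_zero hz.ne')
  rw [inv_inv, abs_of_pos (inv_pos.2 hz), Real.log_inv] at h4
  simp only [Function.comp]
  linarith

/-! ### The sign of the difference of the logarithmic derivatives -/

/-- Difference of the first integral of the equation for `Y` along `α * Gf c a` and along
`Gf d b (z / α)`; by the junk-value convention `log x = log |x|` the same formula serves on both
sides of a singularity. -/
def Psi (c d α a b z : ℝ) : ℝ :=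
  Real.log ((α * Gf c a z - b⁻¹) / (α * Gf c a z + b))
    - d * Real.log ((z / α - b⁻¹) / (z / α + b))

lemma logratio_hasDerivAt {b y : ℝ} (h1 : y - b⁻¹ ≠ 0) (h2 : y + b ≠ 0) :
    HasDerivAt (fun y => Real.log ((y - b⁻¹) / (y + b)))
      ((b + b⁻¹) / ((y - b⁻¹) * (y + b))) y := by
  have h := ((((hasDerivAt_id y).sub_const b⁻¹).div ((hasDerivAt_id y).add_const b) h2).log
    (div_ne_zero h1 h2))
  have h' : HasDerivAt (fun y => Real.log ((y - b⁻¹) / (y + b))) _ y := h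
  convert h' using 1
  simp only [id, Pi.div_apply]
  generalize b⁻¹ = b' at *
  field_simp
  ring

lemma Psi_hasDerivAt {c d α a b z : ℝ} (hc : 0 < c) (ha : 0 < a)
    (h1 : z + a ≠ 0) (h2 : z - a⁻¹ ≠ 0) (h3 : α * Gf c a z - b⁻¹ ≠ 0)
    (h4 : α * Gf c a z + b ≠ 0) (h5 : z / α - b⁻¹ ≠ 0) (h6 : z / α + b ≠ 0) :
    HasDerivAt (Psi c d α a b)
      ((b + b⁻¹) / ((α * Gf c a z - b⁻¹) * (α * Gf c a z + b)) *
        (α * (c * ((Gf c a z + a) * (Gf c a z - a⁻¹)) / ((z + a) * (z - a⁻¹))))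
        - d * ((b + b⁻¹) / ((z / α - b⁻¹) * (z / α + b)) * (1 / α))) z := by
  have k1 := (logratio_hasDerivAt h3 h4).comp z ((Gf_hasDerivAt hc ha h1 h2).const_mul α)
  have k2 := (logratio_hasDerivAt h5 h6).comp z ((hasDerivAt_id z).div_const α)
  exact k1.sub (k2.const_mul d)

/-- The sign of `Psi'` is that of an explicit polynomial in `z` and `y = Gf c a z`. -/
lemma Psi_deriv_pos {c d α a b κ z y : ℝ} (hcd : c < d) (hα : 0 < α) (hd : 0 < d)
    (hb : 0 < b) (hαd : α ^ 2 * d = c) (ha : 0 < a)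
    (hS : (a⁻¹ - a) / 2 = κ * (1 - d)) (hT : α * ((b⁻¹ - b) / 2) = κ * (1 - c))
    (hpos : 0 < ((α * y - b⁻¹) * (α * y + b)) * ((z / α - b⁻¹) * (z / α + b)))
    (hP : 0 < ((z + a) * (z - a⁻¹)) * (((z + a) * (z - a⁻¹)) * (2 * κ * y + 1)
      - c * ((y + a) * (y - a⁻¹)) * (2 * κ * z - 1 / d))) :
    0 < (b + b⁻¹) / ((α * y - b⁻¹) * (α * y + b)) *
        (α * (c * ((y + a) * (y - a⁻¹)) / ((z + a) * (z - a⁻¹))))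
        - d * ((b + b⁻¹) / ((z / α - b⁻¹) * (z / α + b)) * (1 / α)) := by
  have eQ : (z + a) * (z - a⁻¹) = z ^ 2 - 2 * (κ * (1 - d)) * z - 1 := by
    rw [← hS]; field_simp; ring
  have eN : (y + a) * (y - a⁻¹) = y ^ 2 - 2 * (κ * (1 - d)) * y - 1 := by
    rw [← hS]; field_simp; ring
  have e1 : α ^ 2 * ((z / α - b⁻¹) * (z / α + b))
      = (z + a) * (z - a⁻¹) + (d - c) * (1 / d - 2 * κ * z) := by
    have k : α ^ 2 * ((z / α - b⁻¹) * (z / α + b))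
        = z ^ 2 - 2 * (α * ((b⁻¹ - b) / 2)) * z - α ^ 2 := by
      field_simp; ring
    have k2 : α ^ 2 = c / d := by rw [← hαd]; field_simp
    rw [k, eQ, hT, k2]; field_simp; ring
  have e2 : d * ((α * y - b⁻¹) * (α * y + b))
      = c * ((y + a) * (y - a⁻¹)) - (d - c) * (2 * κ * y + 1) := by
    have k : d * ((α * y - b⁻¹) * (α * y + b))
        = (α ^ 2 * d) * y ^ 2 - 2 * d * (α * ((b⁻¹ - b) / 2)) * y - d := by
      field_simp; ring
    rw [k, eN, hT, hαd]; ring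
  have hQ0 : (z + a) * (z - a⁻¹) ≠ 0 := by intro h; rw [h] at hP; simp at hP
  clear eQ eN
  generalize (z + a) * (z - a⁻¹) = Q at *
  generalize (y + a) * (y - a⁻¹) = N at *
  generalize (α * y - b⁻¹) * (α * y + b) = NY at *
  generalize (z / α - b⁻¹) * (z / α + b) = QY at *
  have hNY : NY ≠ 0 := by rintro rfl; simp at hpos
  have hQY : QY ≠ 0 := by rintro rfl; simp at hpos
  have key : (b + b⁻¹) / NY * (α * (c * N / Q)) - d * ((b + b⁻¹) / QY * (1 / α))
      = (b + b⁻¹) / α * (Q * (c * N * (α ^ 2 * QY) - d * NY * Q)) / (Q ^ 2 * (NY * QY)) := by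
    field_simp
  have key2 : Q * (c * N * (α ^ 2 * QY) - d * NY * Q)
      = (d - c) * (Q * (Q * (2 * κ * y + 1) - c * N * (2 * κ * z - 1 / d))) := by
    rw [e1, e2]; ring
  rw [key, key2]
  have : 0 < d - c := by linarith
  have : 0 < Q ^ 2 := by positivity
  positivity

lemma Gf_strictMonoOn {c a : ℝ} (hc : 0 < c) (ha : 0 < a) :
    StrictMonoOn (Gf c a) (Set.Ici a⁻¹) := by
  refine strictMonoOn_of_deriv_pos (convex_Ici _) (Gf_continuous hc ha).continuousOn ?_
  intro x hx
  rw [interior_Ici] at hx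
  have hx' : a⁻¹ < x := hx
  have hai : 0 < a⁻¹ := by positivity
  have g1 := Gf_gt_inv hc ha hx'
  have p1 : 0 < x + a := by linarith
  have p2 : 0 < x - a⁻¹ := by linarith
  have p3 : 0 < Gf c a x + a := by linarith
  have p4 : 0 < Gf c a x - a⁻¹ := by linarith
  rw [(Gf_hasDerivAt hc ha p1.ne' p2.ne').deriv]
  positivity

/-- To the right of the singularity `α / b` of the `Y` side, the comparison holds: once `α * Gf c a`
exceeds `1 / b`, `Psi` increases to its limit `0`, hence is negative. -/
lemma outer_lt {c d α a b κ z : ℝ} (hc : 0 < c) (hcd : c < d) (hd1 : d < 1) (hα : 0 < α)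
    (hα1 : α < 1) (hαd : α ^ 2 * d = c) (ha : 0 < a) (hb : 0 < b)
    (hS : (a⁻¹ - a) / 2 = κ * (1 - d)) (hT : α * ((b⁻¹ - b) / 2) = κ * (1 - c))
    (hκ : 4 * κ ^ 2 * d ≤ 1) (i1 : α * a ≤ b) (i2 : α * b ≤ a) (hz : α * b⁻¹ ≤ z) :
    α * Gf c a z < Gf d b (z / α) := by
  have hd : 0 < d := hc.trans hcd
  have hai : 0 < a⁻¹ := by positivity
  have hbi : 0 < b⁻¹ := by positivity
  have j1 : α * b⁻¹ ≤ a⁻¹ := by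
    field_simp; linarith
  have j2 : α * a⁻¹ ≤ b⁻¹ := by
    field_simp; linarith
  have hz' : b⁻¹ ≤ z / α := by rw [le_div_iff₀ hα]; linarith
  have hH := Gf_ge_inv hd hb hz'
  rcases lt_trichotomy z a⁻¹ with h | h | h
  · have := mul_lt_mul_of_pos_left (Gf_lt_inv hc ha h) hα
    linarith
  · have k := mul_le_mul_of_nonneg_left (Gf_le_inv hc ha h.le) hα.le
    rcases hz.eq_or_lt with h' | h'
    · have : α * (α * b⁻¹) < α * b⁻¹ := by
        nlinarith [mul_pos hα hbi]
      have : α * b⁻¹ < b⁻¹ := by nlinarith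
      have : α * a⁻¹ = α * (α * b⁻¹) := by rw [h', h]
      linarith
    · have : b⁻¹ < z / α := by rw [lt_div_iff₀ hα]; linarith
      have := Gf_gt_inv hd hb this
      linarith
  have hz2 : b⁻¹ < z / α := by rw [lt_div_iff₀ hα]; linarith
  have hH2 := Gf_gt_inv hd hb hz2
  rcases le_or_gt (α * Gf c a z) b⁻¹ with hg | hg
  · linarith
  have hbig : ∀ x, z ≤ x → b⁻¹ < α * Gf c a x := fun x hx => by
    have := (Gf_strictMonoOn hc ha).monotoneOn (Set.mem_Ici.2 h.le)
      (Set.mem_Ici.2 (h.le.trans hx)) hx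
    nlinarith
  have hder : ∀ x, z ≤ x → ∃ D, 0 < D ∧ HasDerivAt (Psi c d α a b) D x := fun x hx => by
    have hxa : a⁻¹ < x := h.trans_le hx
    have hxb : b⁻¹ < x / α := hz2.trans_le (by gcongr)
    have p1 : 0 < x + a := by linarith
    have p2 : 0 < x - a⁻¹ := by linarith
    have p3 := hbig x hx
    have p4 : 0 < α * Gf c a x - b⁻¹ := by linarith
    have p5 : 0 < α * Gf c a x + b := by linarith
    have p6 : 0 < x / α - b⁻¹ := by linarith
    have p7 : 0 < x / α + b := by linarith
    refine ⟨_, ?_, Psi_hasDerivAt hc ha p1.ne' p2.ne' p4.ne' p5.ne' p6.ne' p7.ne'⟩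
    refine Psi_deriv_pos hcd hα hd hb hαd ha hS hT (by positivity) ?_
    have eQ : ∀ t : ℝ, (t + a) * (t - a⁻¹) = t ^ 2 - 2 * ((a⁻¹ - a) / 2) * t - 1 := fun t => by
      field_simp; ring
    obtain ⟨b1, b2, b3⟩ := Gf_bounds hc (hcd.trans hd1) ha hxa
    have hQ : 0 < (x + a) * (x - a⁻¹) := by positivity
    refine mul_pos hQ ?_
    rw [eQ, eQ] at b3
    rw [eQ] at hQ
    have := P_neg hc hcd hd1 hκ hS (hai.trans hxa) b1 hQ b2 b3
    rw [eQ, eQ]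
    linarith
  have hmono : StrictMonoOn (Psi c d α a b) (Set.Ici z) := by
    refine strictMonoOn_of_deriv_pos (convex_Ici _) (fun x hx => ?_) (fun x hx => ?_)
    · obtain ⟨D, -, hD⟩ := hder x hx
      exact hD.continuousAt.continuousWithinAt
    · obtain ⟨D, hD0, hD⟩ := hder x (interior_subset hx)
      rw [hD.deriv]; exact hD0
  have hlim : Tendsto (Psi c d α a b) atTop (𝓝 0) := by
    have l0 : Tendsto (fun y : ℝ => Real.log ((y - b⁻¹) / (y + b))) atTop (𝓝 0) := by
      have l1 : Tendsto (fun y : ℝ => 1 - (b + b⁻¹) / (y + b)) atTop (𝓝 (1 - 0)) :=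
        tendsto_const_nhds.sub (tendsto_const_nhds.div_atTop (tendsto_atTop_add_const_right _ _ tendsto_id))
      rw [sub_zero] at l1
      have l2 := l1.log one_ne_zero
      rw [Real.log_one] at l2
      refine l2.congr' ?_
      filter_upwards [eventually_gt_atTop 0] with y hy
      congr 1
      generalize b⁻¹ = b'
      field_simp; ring
    have l3 : Tendsto (fun x => α * Gf c a x) atTop atTop := by
      refine Tendsto.const_mul_atTop hα (tendsto_atTop_mono' _ ?_ tendsto_id)
      filter_upwards [eventually_gt_atTop a⁻¹] with x hx
      exact (Gf_bounds hc (hcd.trans hd1) ha hx).1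
    have := (l0.comp l3).sub ((l0.comp (tendsto_id.atTop_div_const hα)).const_mul d)
    rw [mul_zero, sub_zero] at this
    exact this
  have hneg : Psi c d α a b z < 0 := by
    have h1 : Psi c d α a b z < Psi c d α a b (z + 1) :=
      hmono (Set.mem_Ici.2 le_rfl) (Set.mem_Ici.2 (by linarith)) (by linarith)
    have h2 : Psi c d α a b (z + 1) ≤ 0 := by
      refine ge_of_tendsto hlim ?_
      filter_upwards [eventually_ge_atTop (z + 1)] with x hx
      exact hmono.monotoneOn (Set.mem_Ici.2 (by linarith)) (Set.mem_Ici.2 (by linarith)) hx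
    linarith
  rw [Psi, ← Gf_log hd hb (by linarith) hz2.ne', sub_neg] at hneg
  have q1 : 0 < α * Gf c a z - b⁻¹ := by linarith
  have q2 : 0 < α * Gf c a z + b := by linarith
  have q3 : 0 < Gf d b (z / α) - b⁻¹ := by linarith
  have q4 : 0 < Gf d b (z / α) + b := by linarith
  have := (Real.log_lt_log_iff (by positivity) (by positivity)).1 hneg
  rw [div_lt_div_iff₀ q2 q4] at this
  have q5 : 0 < (b + b⁻¹) * (Gf d b (z / α) - α * Gf c a z) := by nlinarith
  have := (mul_pos_iff_of_pos_left (by positivity)).1 q5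
  linarith

/-- Between the two singularities of the `Y` side, `Psi` is increasing. There all the factors in
`Psi_deriv_pos` have a definite sign. -/
lemma middle_mono {c d α a b κ : ℝ} (hc : 0 < c) (hcd : c < d) (hα : 0 < α)
    (hαd : α ^ 2 * d = c) (ha : 0 < a) (hb : 0 < b)
    (hS : (a⁻¹ - a) / 2 = κ * (1 - d)) (hT : α * ((b⁻¹ - b) / 2) = κ * (1 - c))
    (hκ0 : 0 < κ) (hκa : 2 * κ * a ≤ 1) (hκd : 2 * κ * d * a⁻¹ ≤ 1)
    (i1 : α * a ≤ b) (i2 : α * b ≤ a) :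
    StrictMonoOn (Psi c d α a b) (Set.Ioo (-(α * b)) (α * b⁻¹)) := by
  have hd : 0 < d := hc.trans hcd
  have hai : 0 < a⁻¹ := by positivity
  have hbi : 0 < b⁻¹ := by positivity
  have j1 : α * b⁻¹ ≤ a⁻¹ := by
    field_simp; linarith
  have j2 : α * a⁻¹ ≤ b⁻¹ := by
    field_simp; linarith
  have hder : ∀ x ∈ Set.Ioo (-(α * b)) (α * b⁻¹),
      ∃ D, 0 < D ∧ HasDerivAt (Psi c d α a b) D x := fun x hx => by
    obtain ⟨hx1, hx2⟩ := hx
    have g1 : -a < Gf c a x := Gf_gt hc ha (by linarith)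
    have g2 : Gf c a x < a⁻¹ := Gf_lt_inv hc ha (by linarith)
    have p1 : 0 < x + a := by linarith
    have p2 : x - a⁻¹ < 0 := by linarith
    have p4 : α * Gf c a x - b⁻¹ < 0 := by nlinarith
    have p5 : 0 < α * Gf c a x + b := by nlinarith
    have p6 : x / α - b⁻¹ < 0 := by rw [sub_neg, div_lt_iff₀ hα]; linarith
    have p7 : 0 < x / α + b := by
      have : -b < x / α := by rw [lt_div_iff₀ hα]; linarith
      linarith
    refine ⟨_, ?_, Psi_hasDerivAt hc ha p1.ne' p2.ne p4.ne p5.ne' p6.ne p7.ne'⟩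
    refine Psi_deriv_pos hcd hα hd hb hαd ha hS hT
      (mul_pos_of_neg_of_neg (mul_neg_of_neg_of_pos p4 p5) (mul_neg_of_neg_of_pos p6 p7)) ?_
    have hQ : (x + a) * (x - a⁻¹) < 0 := mul_neg_of_pos_of_neg p1 p2
    have hN : (Gf c a x + a) * (Gf c a x - a⁻¹) < 0 :=
      mul_neg_of_pos_of_neg (by linarith) (by linarith)
    refine mul_pos_of_neg_of_neg hQ ?_
    have r1 : 0 < 2 * κ * Gf c a x + 1 := by nlinarith
    have r2 : 2 * κ * x - 1 / d < 0 := by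
      rw [sub_neg, lt_div_iff₀ hd]
      have : 2 * κ * d * x < 2 * κ * d * a⁻¹ := by
        apply mul_lt_mul_of_pos_left (by linarith) (by positivity)
      linarith
    have s1 := mul_neg_of_neg_of_pos hQ r1
    have s2 := mul_pos_of_neg_of_neg (mul_neg_of_pos_of_neg hc hN) r2
    linarith
  refine strictMonoOn_of_deriv_pos (convex_Ioo _ _) (fun x hx => ?_) (fun x hx => ?_)
  · obtain ⟨D, -, hD⟩ := hder x hx
    exact hD.continuousAt.continuousWithinAt
  · obtain ⟨D, hD0, hD⟩ := hder x (interior_subset hx)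
    rw [hD.deriv]; exact hD0

lemma logratio_strictAntiOn {b : ℝ} (hb : 0 < b) :
    StrictAntiOn (fun y : ℝ => Real.log ((y - b⁻¹) / (y + b))) (Set.Ioo (-b) b⁻¹) := by
  have hbi : 0 < b⁻¹ := by positivity
  refine strictAntiOn_of_deriv_neg (convex_Ioo _ _) (fun x hx => ?_) (fun x hx => ?_)
  · exact (logratio_hasDerivAt (by linarith [hx.1, hx.2] : x - b⁻¹ < 0).ne
      (by linarith [hx.1, hx.2] : 0 < x + b).ne').continuousAt.continuousWithinAt
  · rw [interior_Ioo] at hx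
    have h1 : x - b⁻¹ < 0 := by linarith [hx.1, hx.2]
    have h2 : 0 < x + b := by linarith [hx.1, hx.2]
    rw [(logratio_hasDerivAt h1.ne h2.ne').deriv]
    exact div_neg_of_pos_of_neg (by positivity) (mul_neg_of_neg_of_pos h1 h2)

/-- `Gf d b (z / α) - α * Gf c a z` changes sign exactly once, from negative to positive. -/
lemma exists_crossing {c d α a b κ : ℝ} (hc : 0 < c) (hcd : c < d) (hd1 : d < 1) (hα : 0 < α)
    (hα1 : α < 1) (hαd : α ^ 2 * d = c) (ha : 0 < a) (hb : 0 < b)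
    (hS : (a⁻¹ - a) / 2 = κ * (1 - d)) (hT : α * ((b⁻¹ - b) / 2) = κ * (1 - c))
    (hκ : 4 * κ ^ 2 * d ≤ 1)
    (hκ0 : 0 < κ) (hκa : 2 * κ * a ≤ 1) (hκd : 2 * κ * d * a⁻¹ ≤ 1)
    (i1 : α * a ≤ b) (i2 : α * b ≤ a) :
    ∃ z₀, (∀ z, z₀ < z → α * Gf c a z < Gf d b (z / α)) ∧
      (∀ z, z < z₀ → Gf d b (z / α) < α * Gf c a z) := by
  have hd : 0 < d := hc.trans hcd
  have hai : 0 < a⁻¹ := by positivity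
  have hbi : 0 < b⁻¹ := by positivity
  have hR : ∀ z, α * b⁻¹ ≤ z → α * Gf c a z < Gf d b (z / α) := fun z hz =>
    outer_lt hc hcd hd1 hα hα1 hαd ha hb hS hT hκ i1 i2 hz
  have hL : ∀ z, z ≤ -(α * b) → Gf d b (z / α) < α * Gf c a z := fun z hz => by
    have := outer_lt (a := a⁻¹) (b := b⁻¹) (κ := -κ) (z := -z) hc hcd hd1 hα hα1 hαd hai hbi
      (by rw [inv_inv]; linarith) (by rw [inv_inv]; linarith) (by rw [neg_sq]; exact hκ)
      (by field_simp; linarith) (by field_simp; linarith) (by rw [inv_inv]; linarith)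
    rw [Gf_neg hai, neg_div, Gf_neg hbi, inv_inv, inv_inv] at this
    linarith
  have hle : -(α * b) ≤ α * b⁻¹ := by
    have := mul_pos hα hb
    have := mul_pos hα hbi
    linarith
  have hcont : ContinuousOn (fun z => Gf d b (z / α) - α * Gf c a z)
      (Set.Icc (-(α * b)) (α * b⁻¹)) := by
    refine Continuous.continuousOn ?_
    exact ((Gf_continuous hd hb).comp (continuous_id.div_const α)).sub
      (continuous_const.mul (Gf_continuous hc ha))
  obtain ⟨z₀, hz₀, h0⟩ := intermediate_value_Icc hle hcont
    (show (0:ℝ) ∈ Set.Icc _ _ from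
      ⟨(sub_neg.2 (hL _ le_rfl)).le, (sub_pos.2 (hR _ le_rfl)).le⟩)
  simp only at h0
  have hin : z₀ ∈ Set.Ioo (-(α * b)) (α * b⁻¹) := by
    refine ⟨lt_of_le_of_ne hz₀.1 ?_, lt_of_le_of_ne hz₀.2 ?_⟩
    · rintro h; have := hL z₀ h.symm.le; linarith
    · rintro h; have := hR z₀ h.symm.le; linarith
  have hmono := middle_mono hc hcd hα hαd ha hb hS hT hκ0 hκa hκd i1 i2
  have hsub : ∀ z ∈ Set.Ioo (-(α * b)) (α * b⁻¹), α * Gf c a z ∈ Set.Ioo (-b) b⁻¹ ∧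
      Gf d b (z / α) ∈ Set.Ioo (-b) b⁻¹ ∧ Psi c d α a b z =
        Real.log ((α * Gf c a z - b⁻¹) / (α * Gf c a z + b))
        - Real.log ((Gf d b (z / α) - b⁻¹) / (Gf d b (z / α) + b)) := fun z hz => by
    have j1 : α * b⁻¹ ≤ a⁻¹ := by
      field_simp; linarith
    have j2 : α * a⁻¹ ≤ b⁻¹ := by
      field_simp; linarith
    have g1 : -a < Gf c a z := Gf_gt hc ha (by linarith [hz.1])
    have g2 : Gf c a z < a⁻¹ := Gf_lt_inv hc ha (by linarith [hz.2])
    have z1 : z / α < b⁻¹ := by rw [div_lt_iff₀ hα]; linarith [hz.2]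
    have z2 : -b < z / α := by rw [lt_div_iff₀ hα]; linarith [hz.1]
    refine ⟨⟨by nlinarith, by nlinarith⟩, ⟨Gf_gt hd hb z2, Gf_lt_inv hd hb z1⟩, ?_⟩
    rw [Gf_log hd hb z2 z1.ne, Psi]
  have hΨ0 : Psi c d α a b z₀ = 0 := by
    have : α * Gf c a z₀ = Gf d b (z₀ / α) := by linarith
    rw [(hsub z₀ hin).2.2, this, sub_self]
  refine ⟨z₀, fun z hz => ?_, fun z hz => ?_⟩
  · rcases le_or_gt (α * b⁻¹) z with h | h
    · exact hR z h
    have hz' : z ∈ Set.Ioo (-(α * b)) (α * b⁻¹) := ⟨hin.1.trans hz, h⟩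
    have h1 := hmono hin hz' hz
    obtain ⟨m1, m2, m3⟩ := hsub z hz'
    rw [hΨ0, m3, sub_pos] at h1
    exact ((logratio_strictAntiOn hb).lt_iff_gt m2 m1).1 h1
  · rcases le_or_gt z (-(α * b)) with h | h
    · exact hL z h
    have hz' : z ∈ Set.Ioo (-(α * b)) (α * b⁻¹) := ⟨h, hz.trans hin.2⟩
    have h1 := hmono hz' hin hz
    obtain ⟨m1, m2, m3⟩ := hsub z hz'
    rw [hΨ0, m3, sub_neg] at h1
    exact ((logratio_strictAntiOn hb).lt_iff_gt m1 m2).1 h1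

/-! ### Comparison of the norms -/

/-- The difference of the logarithms of the norms decreases to its limit `0` at infinity. -/
lemma Lf_lt_right {c d α a b z₀ : ℝ} (hc : 0 < c) (hd : 0 < d) (hα : 0 < α) (ha : 0 < a)
    (hb : 0 < b) (h : ∀ z, z₀ < z → α * Gf c a z < Gf d b (z / α)) {z : ℝ} (hz : z₀ ≤ z) :
    Lf d b (z / α) + Real.log α < Lf c a z := by
  have hder : ∀ x, HasDerivAt (fun z => Lf c a z - (Lf d b (z / α) + Real.log α))
      (Gf c a x / (x * Gf c a x + 1)
        - Gf d b (x / α) / (x / α * Gf d b (x / α) + 1) * (1 / α)) x := fun x =>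
    (Lf_hasDerivAt hc ha x).sub
      (((Lf_hasDerivAt hd hb (x / α)).comp x ((hasDerivAt_id x).div_const α)).add_const _)
  have hanti : StrictAntiOn (fun z => Lf c a z - (Lf d b (z / α) + Real.log α)) (Set.Ici z₀) := by
    refine strictAntiOn_of_deriv_neg (convex_Ici _)
      (fun x _ => (hder x).continuousAt.continuousWithinAt) (fun x hx => ?_)
    rw [interior_Ici] at hx
    rw [(hder x).deriv]
    have h1 := zG_pos hc ha x
    have h2 := zG_pos hd hb (x / α)
    have h3 := h x hx
    have h4 : 0 < x * Gf d b (x / α) + α := by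
      have : x * Gf d b (x / α) + α = α * (x / α * Gf d b (x / α) + 1) := by field_simp
      rw [this]; positivity
    have e : Gf d b (x / α) / (x / α * Gf d b (x / α) + 1) * (1 / α)
        = Gf d b (x / α) / (x * Gf d b (x / α) + α) := by
      have : x * Gf d b (x / α) + α = α * (x / α * Gf d b (x / α) + 1) := by field_simp
      rw [this, div_mul_div_comm, mul_one, mul_comm α]
    rw [e, sub_neg, div_lt_div_iff₀ h1 h4]
    linarith
  have hlim : Tendsto (fun z => Lf c a z - (Lf d b (z / α) + Real.log α)) atTop (𝓝 0) := by
    have l := (Lf_tendsto hc ha).sub ((Lf_tendsto hd hb).comp (tendsto_id.atTop_div_const hα))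
    rw [sub_zero] at l
    refine l.congr' ?_
    filter_upwards [eventually_gt_atTop 0] with x hx
    simp only [Function.comp, id]
    rw [Real.log_div hx.ne' hα.ne']
    ring
  have h1 := hanti (Set.mem_Ici.2 hz) (Set.mem_Ici.2 (by linarith : z₀ ≤ z + 1))
    (by linarith : z < z + 1)
  have h2 : 0 ≤ Lf c a (z + 1) - (Lf d b ((z + 1) / α) + Real.log α) := by
    refine le_of_tendsto hlim ?_
    filter_upwards [eventually_ge_atTop (z + 1)] with x hx
    exact hanti.antitoneOn (Set.mem_Ici.2 (by linarith)) (Set.mem_Ici.2 (by linarith)) hx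
  simp only at h1
  linarith

/-- The strict inequality between the norms, at `z = 1 / r`. To the left of the crossing point it
follows from the case to the right by reflection. -/
lemma Lf_lt {c d α a b κ : ℝ} (hc : 0 < c) (hcd : c < d) (hd1 : d < 1) (hα : 0 < α)
    (hα1 : α < 1) (hαd : α ^ 2 * d = c) (ha : 0 < a) (hb : 0 < b)
    (hS : (a⁻¹ - a) / 2 = κ * (1 - d)) (hT : α * ((b⁻¹ - b) / 2) = κ * (1 - c))
    (hκ : 4 * κ ^ 2 * d ≤ 1)
    (hκ0 : 0 < κ) (hκa : 2 * κ * a ≤ 1) (hκd : 2 * κ * d * a⁻¹ ≤ 1)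
    (i1 : α * a ≤ b) (i2 : α * b ≤ a) (z : ℝ) :
    Lf d b (z / α) + Real.log α < Lf c a z := by
  obtain ⟨z₀, h1, h2⟩ := exists_crossing hc hcd hd1 hα hα1 hαd ha hb hS hT hκ hκ0 hκa hκd i1 i2
  have hd : 0 < d := hc.trans hcd
  have hai : 0 < a⁻¹ := by positivity
  have hbi : 0 < b⁻¹ := by positivity
  rcases le_total z₀ z with h | h
  · exact Lf_lt_right hc hd hα ha hb h1 h
  · have := Lf_lt_right (z₀ := -z₀) (z := -z) hc hd hα hai hbi (fun x hx => ?_) (by linarith)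
    · rwa [Lf_neg hai, neg_div, Lf_neg hbi, inv_inv, inv_inv] at this
    · have := h2 (-x) (by linarith)
      rw [Gf_neg ha, neg_div, Gf_neg hb] at this
      linarith

/-- The weighted norm in the form in which it enters the theorem. -/
lemma norm_eq_exp {c a r : ℝ} (hc : 0 < c) (ha : 0 < a) (hr : r ≠ 0) :
    (1 / (1 + a ^ 2) * |1 + a * r| ^ (c + 1)
      + a ^ 2 / (1 + a ^ 2) * |1 - a⁻¹ * r| ^ (c + 1)) ^ (1 / (c + 1))
      = Real.exp (Lf c a r⁻¹ + Real.log |r|) := by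
  have hr' : 0 < |r| := abs_pos.2 hr
  have hpos : 0 < (|1 + a * r| ^ (c + 1) + a ^ 2 * |1 - a⁻¹ * r| ^ (c + 1)) / (1 + a ^ 2) := by
    have e1 : |1 + a * r| = |r| * |r⁻¹ + a| := by
      rw [← abs_mul]; congr 1; field_simp
    have e2 : |1 - a⁻¹ * r| = |r| * |r⁻¹ - a⁻¹| := by
      rw [← abs_mul]; congr 1; field_simp
    have h := Lf_arg_pos (c := c) ha r⁻¹
    rw [e1, e2, Real.mul_rpow hr'.le (abs_nonneg _), Real.mul_rpow hr'.le (abs_nonneg _)]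
    have : 0 < |r| ^ (c + 1) * (|r⁻¹ + a| ^ (c + 1) + a ^ 2 * |r⁻¹ - a⁻¹| ^ (c + 1))
      / (1 + a ^ 2) := by positivity
    refine lt_of_lt_of_eq this ?_
    ring
  rw [Lf_scale hc ha hr, sub_add_cancel, mul_comm (1 / (c + 1)), ← Real.rpow_def_of_pos hpos]
  congr 1
  ring

/-- With `a = (x2 / x1)^(s/2)` the weights are the probabilities `1 / (1 + a²)` and
`a² / (1 + a²)`. -/
lemma weights_eq {s x1 x2 : ℝ} (h1 : 0 < x1) (h2 : 0 < x2) (hsum : x1 ^ s + x2 ^ s = 1) :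
    0 < (x2 / x1) ^ (s / 2) ∧ (x1 / x2) ^ (s / 2) = ((x2 / x1) ^ (s / 2))⁻¹ ∧
    ((x2 / x1) ^ (s / 2)) ^ 2 = x2 ^ s / x1 ^ s ∧
    x1 ^ s = 1 / (1 + ((x2 / x1) ^ (s / 2)) ^ 2) ∧
    x2 ^ s = ((x2 / x1) ^ (s / 2)) ^ 2 / (1 + ((x2 / x1) ^ (s / 2)) ^ 2) := by
  have hx : 0 < x2 / x1 := by positivity
  have e : ((x2 / x1) ^ (s / 2)) ^ 2 = x2 ^ s / x1 ^ s := by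
    rw [← Real.rpow_natCast, ← Real.rpow_mul hx.le, ← Real.div_rpow h2.le h1.le]
    norm_num
  have p1 : 0 < x1 ^ s := by positivity
  have p2 : 0 < x2 ^ s := by positivity
  refine ⟨by positivity, ?_, e, ?_, ?_⟩
  · rw [← Real.inv_rpow hx.le, inv_div]
  · rw [e]; field_simp; linarith
  · rw [e]; field_simp; rw [hsum]

lemma sqrt_diff {a : ℝ} (ha : 0 < a) :
    (a ^ 2) ^ (-(1 / 2) : ℝ) * (1 - a ^ 2) = a⁻¹ - a := by
  have : (a ^ 2) ^ (-(1 / 2) : ℝ) = a⁻¹ := by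
    rw [Real.rpow_neg (by positivity), ← Real.sqrt_eq_rpow, Real.sqrt_sq ha.le]
  rw [this]; field_simp

/-- The two-point inequality in terms of `a = √u` and `b = √v`: the bounds `d ≤ a² < 1` and the
relation between `a` and `b` yield all the hypotheses of `Lf_lt`. -/
lemma Lf_lt_of_rel {c d α a b : ℝ} (hc : 0 < c) (hcd : c < d) (hd1 : d < 1) (hα : 0 < α)
    (hαd : α ^ 2 * d = c) (ha : 0 < a) (hb : 0 < b) (ha1 : a < 1) (had : d ≤ a ^ 2)
    (hrel : (1 - d) * α * (b⁻¹ - b) = (1 - c) * (a⁻¹ - a)) (z : ℝ) :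
    Lf d b (z / α) + Real.log α < Lf c a z := by
  have hd : 0 < d := hc.trans hcd
  have hai : 0 < a⁻¹ := by positivity
  have hbi : 0 < b⁻¹ := by positivity
  have hda : 0 < 1 - d := by linarith
  have hm : a * a⁻¹ = 1 := mul_inv_cancel₀ ha.ne'
  have hmb : b * b⁻¹ = 1 := mul_inv_cancel₀ hb.ne'
  have hα1 : α < 1 := by
    have : α ^ 2 < 1 := by
      by_contra h
      nlinarith [not_lt.1 h]
    nlinarith
  obtain ⟨κ, hκdef⟩ : ∃ κ, κ = (a⁻¹ - a) / 2 / (1 - d) := ⟨_, rfl⟩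
  have hS : (a⁻¹ - a) / 2 = κ * (1 - d) := by rw [hκdef]; field_simp
  have hT : α * ((b⁻¹ - b) / 2) = κ * (1 - c) := by
    have : (1 - d) * (α * ((b⁻¹ - b) / 2)) = (1 - d) * (κ * (1 - c)) := by
      linear_combination hrel / 2 + (1 - c) * hS
    exact mul_left_cancel₀ hda.ne' this
  have hlt : a < a⁻¹ := by nlinarith [one_lt_inv_iff₀.2 ⟨ha, ha1⟩]
  have hκ0 : 0 < κ := by rw [hκdef]; apply div_pos <;> linarith
  have hκa' : 2 * κ * a * (1 - d) = 1 - a ^ 2 := by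
    linear_combination (-2 * a) * hS + hm
  have hκa : 2 * κ * a ≤ 1 := by
    have : 2 * κ * a * (1 - d) ≤ 1 * (1 - d) := by linarith
    exact le_of_mul_le_mul_right this hda
  have hκd : 2 * κ * d * a⁻¹ ≤ 1 := by
    have e : 2 * κ * d * a⁻¹ * a ^ 2 = 2 * κ * a * d := by
      linear_combination (2 * κ * d * a) * hm
    have : 2 * κ * a * d ≤ 1 * a ^ 2 := by nlinarith
    rw [← e] at this
    exact le_of_mul_le_mul_right this (by positivity)
  have hκ : 4 * κ ^ 2 * d ≤ 1 := by
    have e : 4 * κ ^ 2 * d = (2 * κ * a) * (2 * κ * d * a⁻¹) := by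
      linear_combination (-4 * κ ^ 2 * d) * hm
    rw [e]
    exact mul_le_one₀ hκa (by positivity) hκd
  have hα2 : α ^ 2 = c / d := by rw [← hαd]; field_simp
  have j : α * b⁻¹ ≤ a⁻¹ := by
    have e : d * ((a⁻¹ + α * b) * (a⁻¹ - α * b⁻¹)) = (d - c) * (1 - 2 * κ * d * a⁻¹) := by
      linear_combination (-d * α ^ 2) * hmb - 2 * d * a⁻¹ * hT + 2 * d * a⁻¹ * hS
        + d * hm - hαd
    by_contra h
    push Not at h
    have k1 : 0 ≤ (d - c) * (1 - 2 * κ * d * a⁻¹) := mul_nonneg (by linarith) (by linarith)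
    have k2 : (a⁻¹ + α * b) * (a⁻¹ - α * b⁻¹) < 0 :=
      mul_neg_of_pos_of_neg (by positivity) (by linarith)
    nlinarith
  have i1 : α * a ≤ b := by
    have := mul_le_mul_of_nonneg_right j (mul_pos ha hb).le
    calc α * a = α * b⁻¹ * (a * b) := by field_simp
      _ ≤ a⁻¹ * (a * b) := this
      _ = b := by field_simp
  have i2 : α * b ≤ a := by
    have e : d * ((a - α * b) * (a + α * b⁻¹)) = (d - c) * (2 * κ * d * a + 1) := by
      linear_combination (-d * α ^ 2) * hmb + 2 * d * a * hT - 2 * d * a * hS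
        + d * hm - hαd
    by_contra h
    push Not at h
    have k1 : 0 ≤ (d - c) * (2 * κ * d * a + 1) := mul_nonneg (by linarith) (by positivity)
    have k2 : (a - α * b) * (a + α * b⁻¹) < 0 :=
      mul_neg_of_neg_of_pos (by linarith) (by positivity)
    nlinarith
  exact Lf_lt hc hcd hd1 hα hα1 hαd ha hb hS hT hκ hκ0 hκa hκd i1 i2 z

end

/-- Lemma 3 of the paper: the key inequality in case (b), 1 < p < q < 2, 1/2 < x1^p ≤ 1/q. -/
theorem stmt_8 (p q α : ℝ) (hp : 1 < p) (hpq : p < q) (hq : q < 2)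
    (hα : α = Real.sqrt ((p - 1) / (q - 1)))
    (x1 x2 y1 y2 : ℝ) (hx21 : x2 ≤ x1) (hx2pos : 0 < x2)
    (hxsum : x1 ^ p + x2 ^ p = 1)
    (hxlo : 1 / 2 < x1 ^ p) (hxhi : x1 ^ p ≤ 1 / q)
    (hy1pos : 0 < y1) (hy2pos : 0 < y2) (hysum : y1 ^ q + y2 ^ q = 1)
    (u v : ℝ) (hu : u = x2 ^ p / x1 ^ p) (hv : v = y2 ^ q / y1 ^ q)
    (hrel : (2 - q) * α * v ^ (-(1 / 2) : ℝ) * (1 - v)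
          = (2 - p) * u ^ (-(1 / 2) : ℝ) * (1 - u)) :
    ∀ r : ℝ,
      (y1 ^ q * |1 + α * (y2 / y1) ^ (q / 2) * r| ^ q
        + y2 ^ q * |1 - α * (y1 / y2) ^ (q / 2) * r| ^ q) ^ (1 / q)
      ≤ (x1 ^ p * |1 + (x2 / x1) ^ (p / 2) * r| ^ p
        + x2 ^ p * |1 - (x1 / x2) ^ (p / 2) * r| ^ p) ^ (1 / p)
      ∧ ((y1 ^ q * |1 + α * (y2 / y1) ^ (q / 2) * r| ^ q
            + y2 ^ q * |1 - α * (y1 / y2) ^ (q / 2) * r| ^ q) ^ (1 / q)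
          = (x1 ^ p * |1 + (x2 / x1) ^ (p / 2) * r| ^ p
            + x2 ^ p * |1 - (x1 / x2) ^ (p / 2) * r| ^ p) ^ (1 / p)
          → r = 0) := by
  intro r
  rcases eq_or_ne r 0 with rfl | hr
  · simp [hysum, hxsum]
  have hx1pos : 0 < x1 := hx2pos.trans_le hx21
  have hd : 0 < q - 1 := by linarith
  have hc : 0 < p - 1 := by linarith
  have hα0 : 0 < α := by rw [hα]; positivity
  have hαd : α ^ 2 * (q - 1) = p - 1 := by
    rw [hα, Real.sq_sqrt (by positivity)]; field_simp
  obtain ⟨ha, ha', hu', hX1, hX2⟩ := weights_eq hx1pos hx2pos hxsum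
  obtain ⟨hb, hb', hv', hY1, hY2⟩ := weights_eq hy1pos hy2pos hysum
  rw [← hu'] at hu
  rw [← hv'] at hv
  rw [hu, hv, mul_assoc, mul_assoc (2 - p), sqrt_diff ha, sqrt_diff hb] at hrel
  rw [hX1] at hxlo hxhi
  rw [ha', hb', hX1, hX2, hY1, hY2]
  clear hX1 hX2 hY1 hY2 ha' hb' hu' hv' hu hv
  generalize (x2 / x1) ^ (p / 2) = a at *
  generalize (y2 / y1) ^ (q / 2) = b at *
  have ha1 : a < 1 := by
    rw [div_lt_div_iff₀ (by norm_num) (by positivity)] at hxlo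
    nlinarith
  have had : q - 1 ≤ a ^ 2 := by
    rw [div_le_div_iff₀ (by positivity) (by linarith)] at hxhi
    linarith
  have key := Lf_lt_of_rel hc (by linarith : p - 1 < q - 1) (by linarith) hα0 hαd ha hb ha1 had
    (by linear_combination hrel) r⁻¹
  have nX := norm_eq_exp (r := r) hc ha hr
  have nY := norm_eq_exp (r := α * r) hd hb (mul_ne_zero hα0.ne' hr)
  rw [sub_add_cancel] at nX nY
  rw [show α * b * r = b * (α * r) by ring, show α * b⁻¹ * r = b⁻¹ * (α * r) by ring, nX, nY]
  have hlt : Real.exp (Lf (q - 1) b (α * r)⁻¹ + Real.log |α * r|)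
      < Real.exp (Lf (p - 1) a r⁻¹ + Real.log |r|) := by
    rw [Real.exp_lt_exp, abs_mul, abs_of_pos hα0,
      Real.log_mul hα0.ne' (abs_pos.2 hr).ne', mul_inv, mul_comm α⁻¹, ← div_eq_mul_inv]
    linarith
  exact ⟨hlt.le, fun h => absurd h hlt.ne⟩
end
end

section
/- Let 1 < p < q ≤ 2. Then for every real t, [ (1/p)·|1 + (p−1)t|^q + ((p−1)/p)·|1 − t|^q ]^{1/q} ≤ [ (1/q)·|1 + (q−1)t|^p + ((q−1)/q)·|1 − t|^p ]^{1/p}, with strict inequality for t ≠ 0. -/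
/-! Write `logSide p q x` for the logarithm of `((x ^ q + p - 1) / p) ^ (1 / q)`. Dividing both sides
by `|1 - t|`, taking logarithms and putting `τ = t / (1 - t)` turns the inequality for `t ≠ 1` into
`logSide p q |1 + p τ| < logSide q p |1 + q τ|` for `τ ≠ 0`. Let `k` be the left side minus the right
side. Where both `p x + b` and `q x + b` are positive (`b = 1` with `x = τ`, or `b = -1` with
`x = -τ`), the sign of `k'` is the sign of `crit - b (q - p)`, where
`crit = p (q - 1) (q x + b) ^ (1 - p) - q (p - 1) (p x + b) ^ (1 - q)`,
and `crit'` is a positive multiple of `(p x + b) ^ (-q) - (q x + b) ^ (-p)`.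

* For `b = 1`, Bernoulli's inequality gives `(q x + 1) ^ p < (p x + 1) ^ q`, so `crit` is strictly
  decreasing and takes the value `q - p` at `0`. Hence `k` increases up to `0`, where it vanishes,
  and decreases afterwards (`gap_one_neg`).
* For `τ` between `-1 / p` and `-1 / q`, the quantities `|1 + p τ|` and `|1 + q τ|` are monotone in
  opposite senses, which reduces the claim to `τ = -1 / q` (`gap_mid_neg`).
* For `b = -1` and `x > 1 / p`, `crit ≤ p - q` at `x` forces `crit ≤ p - q` on all of `(1 / p, x]`
  (`crit_neg_persist`). So either `k` is decreasing on `[1 / p, x]` and `k x ≤ k (1 / p) < 0`, or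
  `k` is increasing on `[x, ∞)` and is bounded by its limit at infinity (`gap_neg_one_neg`). This
  limit is negative because `p log p / (p - 1)` is strictly increasing in `p`; the same inequality
  is the case `t = 1` (`log_ratio_lt`). -/

noncomputable section

open Real Set Filter Topology

/-! ### The logarithmic form and its derivative -/

/-- The logarithm of `((x ^ q + p - 1) / p) ^ (1 / q)`, meant for `x ≥ 0`. -/
def logSide (p q x : ℝ) : ℝ := log ((x ^ q + (p - 1)) / p) / q

/-- The difference of the two logarithmic sides along `x ↦ (p x + b, q x + b)`. -/
def gap (p q b x : ℝ) : ℝ := logSide p q (p * x + b) - logSide q p (q * x + b)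

/-- The function whose comparison with `b * (q - p)` decides the sign of the derivative of `gap`. -/
def crit (p q b x : ℝ) : ℝ :=
  p * (q - 1) * (q * x + b) ^ (1 - p) - q * (p - 1) * (p * x + b) ^ (1 - q)

lemma logSide_arg_pos {p q x : ℝ} (hp : 1 < p) (hx : 0 ≤ x) : 0 < (x ^ q + (p - 1)) / p := by
  have := rpow_nonneg hx q
  exact div_pos (by linarith) (by linarith)

lemma logSide_mono {p q x y : ℝ} (hp : 1 < p) (hq : 1 < q) (hx : 0 ≤ x) (hxy : x ≤ y) :
    logSide p q x ≤ logSide p q y := by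
  have h := logSide_arg_pos (q := q) hp hx
  have h1 := rpow_le_rpow hx hxy (by linarith : 0 ≤ q)
  unfold logSide
  gcongr

lemma hasDerivAt_logSide {p q x : ℝ} (hp : 1 < p) (hq : 1 < q) (hx : 0 < x) :
    HasDerivAt (logSide p q) (1 / (x + (p - 1) * x ^ (1 - q))) x := by
  have hpos := rpow_pos_of_pos hx q
  have h1 := ((((hasDerivAt_rpow_const (p := q) (Or.inl hx.ne')).add_const (p - 1)).div_const p).log
    (logSide_arg_pos hp hx.le).ne').div_const q
  refine h1.congr_deriv ?_
  rw [rpow_sub hx, rpow_sub hx, rpow_one]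
  have : x ^ q + (p - 1) ≠ 0 := by linarith
  have h2 : x + (p - 1) * (x / x ^ q) ≠ 0 := by
    have : 0 < (p - 1) * (x / x ^ q) := mul_pos (by linarith) (by positivity)
    linarith
  field_simp

lemma continuousOn_logSide {p q : ℝ} (hp : 1 < p) (hq : 1 < q) :
    ContinuousOn (logSide p q) (Ici 0) := by
  unfold logSide
  refine ContinuousOn.div_const (ContinuousOn.log ?_ ?_) q
  · exact ((continuous_rpow_const (by linarith)).add continuous_const).continuousOn.div_const p
  · exact fun x hx => (logSide_arg_pos hp hx).ne'

lemma hasDerivAt_gap {p q b x : ℝ} (hp : 1 < p) (hq : 1 < q) (hr : 0 < p * x + b)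
    (hs : 0 < q * x + b) :
    HasDerivAt (gap p q b) (p / (p * x + b + (p - 1) * (p * x + b) ^ (1 - q))
      - q / (q * x + b + (q - 1) * (q * x + b) ^ (1 - p))) x := by
  have h (c : ℝ) : HasDerivAt (fun y => c * y + b) c x := by
    simpa using ((hasDerivAt_id x).const_mul c).add_const b
  have h1 := (hasDerivAt_logSide hp hq hr).comp x (h p)
  have h2 := (hasDerivAt_logSide hq hp hs).comp x (h q)
  refine (h1.sub h2).congr_deriv ?_
  ring

lemma continuousOn_gap {p q b : ℝ} (hp : 1 < p) (hq : 1 < q) {D : Set ℝ}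
    (hr : ∀ x ∈ D, 0 ≤ p * x + b) (hs : ∀ x ∈ D, 0 ≤ q * x + b) :
    ContinuousOn (gap p q b) D := by
  unfold gap
  exact ((continuousOn_logSide hp hq).comp (by fun_prop) hr).sub
    ((continuousOn_logSide hq hp).comp (by fun_prop) hs)

/-- The derivative of `gap` is a positive multiple of `crit p q b x - b * (q - p)`. -/
lemma deriv_gap_eq {p q b x : ℝ} (hp : 1 < p) (hq : 1 < q) (hr : 0 < p * x + b)
    (hs : 0 < q * x + b) :
    ∃ c : ℝ, 0 < c ∧ deriv (gap p q b) x = c * (crit p q b x - b * (q - p)) := by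
  rw [(hasDerivAt_gap hp hq hr hs).deriv]
  have h1 : 0 < p * x + b + (p - 1) * (p * x + b) ^ (1 - q) :=
    add_pos hr (mul_pos (by linarith) (rpow_pos_of_pos hr _))
  have h2 : 0 < q * x + b + (q - 1) * (q * x + b) ^ (1 - p) :=
    add_pos hs (mul_pos (by linarith) (rpow_pos_of_pos hs _))
  refine ⟨_, inv_pos.2 (mul_pos h1 h2), ?_⟩
  rw [div_sub_div _ _ h1.ne' h2.ne', div_eq_inv_mul]
  congr 1
  unfold crit
  ring

lemma hasDerivAt_crit {p q b x : ℝ} (hr : 0 < p * x + b) (hs : 0 < q * x + b) :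
    HasDerivAt (crit p q b)
      (p * q * (p - 1) * (q - 1) * ((p * x + b) ^ (-q) - (q * x + b) ^ (-p))) x := by
  have h (c : ℝ) : HasDerivAt (fun y => c * y + b) c x := by
    simpa using ((hasDerivAt_id x).const_mul c).add_const b
  have h1 := ((h q).rpow_const (p := 1 - p) (Or.inl hs.ne')).const_mul (p * (q - 1))
  have h2 := ((h p).rpow_const (p := 1 - q) (Or.inl hr.ne')).const_mul (q * (p - 1))
  refine (h1.sub h2).congr_deriv ?_
  rw [show 1 - p - 1 = -p by ring, show 1 - q - 1 = -q by ring]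
  ring

/-! ### The range `τ ≥ -1 / q` -/

lemma rpow_lt_rpow_of_bernoulli {p q x : ℝ} (hp : 1 < p) (hpq : p < q) (hs : 0 < q * x + 1) (hx : x ≠ 0) :
    (q * x + 1) ^ p < (p * x + 1) ^ q := by
  have hq : 0 < q := by linarith
  have h := rpow_one_add_lt_one_add_mul_self (s := q * x) (p := p / q) (by linarith)
    (mul_ne_zero hq.ne' hx) (by positivity) ((div_lt_one hq).2 hpq)
  have h1 : p / q * (q * x) = p * x := by field_simp
  rw [h1, add_comm 1, add_comm 1] at h
  have h2 := rpow_lt_rpow (rpow_nonneg hs.le _) h hq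
  rwa [← rpow_mul hs.le, div_mul_cancel₀ _ hq.ne'] at h2

lemma pos_of_pos_one {p q x : ℝ} (hp : 1 < p) (hpq : p < q) (hs : 0 < q * x + 1) :
    0 < p * x + 1 := by
  rcases le_total 0 x with h | h <;> nlinarith

lemma crit_one_strictAntiOn {p q : ℝ} (hp : 1 < p) (hpq : p < q) {D : Set ℝ} (hD : Convex ℝ D)
    (hs : ∀ x ∈ D, 0 < q * x + 1) (h0 : ∀ x ∈ interior D, x ≠ 0) :
    StrictAntiOn (crit p q 1) D := by
  have hr (x) (hx : x ∈ D) := pos_of_pos_one hp hpq (hs x hx)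
  refine strictAntiOn_of_deriv_neg hD (fun x hx => (hasDerivAt_crit (hr x hx)
    (hs x hx)).continuousAt.continuousWithinAt) fun x hx => ?_
  have hxD := interior_subset hx
  rw [(hasDerivAt_crit (hr x hxD) (hs x hxD)).deriv, rpow_neg (hr x hxD).le,
    rpow_neg (hs x hxD).le]
  have h1 := inv_strictAnti₀ (rpow_pos_of_pos (hs x hxD) p)
    (rpow_lt_rpow_of_bernoulli hp hpq (hs x hxD) (h0 x hx))
  have h2 : 0 < p * q * (p - 1) * (q - 1) := by
    have : 0 < p - 1 := by linarith
    have : 0 < q - 1 := by linarith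
    have : 0 < q := by linarith
    positivity
  exact mul_neg_of_pos_of_neg h2 (by linarith)

lemma crit_one_zero (p q : ℝ) : crit p q 1 0 = q - p := by
  simp [crit]; ring

lemma gap_one_zero {p q : ℝ} (hp : 1 < p) (hq : 1 < q) : gap p q 1 0 = 0 := by
  have : p ≠ 0 := by linarith
  have : q ≠ 0 := by linarith
  simp [gap, logSide, *]

/-- The inequality on `-1 / q ≤ τ`, with the closed end point allowed. -/
lemma gap_one_neg {p q x : ℝ} (hp : 1 < p) (hpq : p < q) (hs : 0 ≤ q * x + 1) (hx : x ≠ 0) :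
    gap p q 1 x < 0 := by
  have hq : 1 < q := by linarith
  have hq0 : 0 < q := by linarith
  rw [← gap_one_zero hp hq]
  rcases lt_or_gt_of_ne hx with h | h
  · have hs' (y) (hy : y ∈ Icc x 0) : 0 ≤ q * y + 1 := by nlinarith [hy.1]
    have hr' (y) (hy : y ∈ Icc x 0) : 0 ≤ p * y + 1 := by nlinarith [hs' y hy, hy.2]
    refine strictMonoOn_of_deriv_pos (convex_Icc x 0) (continuousOn_gap hp hq hr' hs') ?_
      (left_mem_Icc.2 h.le) (right_mem_Icc.2 h.le) h
    intro y hy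
    rw [interior_Icc] at hy
    have hsy : 0 < q * y + 1 := by nlinarith [hy.1]
    obtain ⟨c, hc, e⟩ := deriv_gap_eq (b := 1) hp hq (pos_of_pos_one hp hpq hsy) hsy
    have hy0 := hy.2.le
    have := crit_one_strictAntiOn hp hpq (convex_Icc y 0) (fun z hz => by nlinarith [hz.1])
      (fun z hz => by rw [interior_Icc] at hz; exact hz.2.ne) (left_mem_Icc.2 hy0)
      (right_mem_Icc.2 hy0) hy.2
    rw [crit_one_zero] at this
    rw [e]
    exact mul_pos hc (by linarith)
  · have hs' (y) (hy : y ∈ Icc 0 x) : 0 < q * y + 1 := by nlinarith [hy.1]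
    have hr' (y) (hy : y ∈ Icc 0 x) := pos_of_pos_one hp hpq (hs' y hy)
    refine strictAntiOn_of_deriv_neg (convex_Icc 0 x) (continuousOn_gap hp hq
      (fun y hy => (hr' y hy).le) (fun y hy => (hs' y hy).le)) ?_
      (left_mem_Icc.2 h.le) (right_mem_Icc.2 h.le) h
    intro y hy
    rw [interior_Icc] at hy
    have hsy := hs' y (Ioo_subset_Icc_self hy)
    obtain ⟨c, hc, e⟩ := deriv_gap_eq (b := 1) hp hq (pos_of_pos_one hp hpq hsy) hsy
    have hy0 := hy.1.le
    have := crit_one_strictAntiOn hp hpq (convex_Icc 0 y) (fun z hz => by nlinarith [hz.1])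
      (fun z hz => by rw [interior_Icc] at hz; exact hz.1.ne') (left_mem_Icc.2 hy0)
      (right_mem_Icc.2 hy0) hy.1
    rw [crit_one_zero] at this
    rw [e]
    exact mul_neg_of_pos_of_neg hc (by linarith)

/-! ### The range `-1 / p ≤ τ ≤ -1 / q` -/

lemma gap_mid_neg {p q x : ℝ} (hp : 1 < p) (hpq : p < q) (h1 : 0 ≤ 1 - p * x)
    (h2 : 0 ≤ q * x - 1) : logSide p q (1 - p * x) < logSide q p (q * x - 1) := by
  have hq : 1 < q := by linarith
  have hq0 : 0 < q := by linarith
  have h := gap_one_neg (x := -(1 / q)) hp hpq (by field_simp; norm_num)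
    (neg_ne_zero.2 (by positivity))
  unfold gap at h
  have hx : 1 / q ≤ x := by rw [div_le_iff₀ hq0]; linarith
  have e : q * -(1 / q) + 1 = 0 := by field_simp; norm_num
  rw [e] at h
  have a := logSide_mono (x := 1 - p * x) (y := p * -(1 / q) + 1) hp hq h1 (by nlinarith)
  have b := logSide_mono (p := q) (q := p) hq hp le_rfl h2
  linarith

/-! ### The range `τ < -1 / p` -/

/-- Monotonicity of `(p x - 1) ^ q / (q x - 1) ^ p`, again from Bernoulli's inequality. -/
lemma rpow_lt_persist {p q x y : ℝ} (hp : 1 < p) (hpq : p < q) (hy : 0 < p * y + -1) (hyx : y ≤ x)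
    (h : (p * x + -1) ^ q < (q * x + -1) ^ p) : (p * y + -1) ^ q < (q * y + -1) ^ p := by
  have hq0 : 0 < q := by linarith
  have hp0 : 0 < p := by linarith
  have hy0 : 0 < y := by nlinarith
  have hrx : 0 < p * x + -1 := by nlinarith
  have hsy : 0 < q * y + -1 := by nlinarith
  have hsx : 0 < q * x + -1 := by nlinarith
  have b := rpow_one_add_le_one_add_mul_self (s := q * (x - y) / (q * y + -1)) (p := p / q)
    (by have : 0 ≤ q * (x - y) / (q * y + -1) := div_nonneg (by nlinarith) hsy.le
        linarith) (by positivity) ((div_le_one hq0).2 hpq.le)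
  have e : 1 + q * (x - y) / (q * y + -1) = (q * x + -1) / (q * y + -1) := by field_simp; ring
  rw [e] at b
  have b2 : 1 + p / q * (q * (x - y) / (q * y + -1)) ≤ (p * x + -1) / (p * y + -1) := by
    have e2 : (p * x + -1) / (p * y + -1) = 1 + p * (x - y) / (p * y + -1) := by field_simp; ring
    have e3 : p / q * (q * (x - y) / (q * y + -1)) = p * (x - y) / (q * y + -1) := by field_simp
    rw [e2, e3]
    have : 0 ≤ p * (x - y) := by nlinarith
    have : p * y + -1 ≤ q * y + -1 := by nlinarith
    gcongr
  have b3 := rpow_le_rpow (by positivity) (b.trans b2) hq0.le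
  rw [← rpow_mul (by positivity), div_mul_cancel₀ _ hq0.ne', div_rpow hsx.le hsy.le,
    div_rpow hrx.le hy.le, div_le_div_iff₀ (by positivity) (by positivity)] at b3
  by_contra! hc
  have : (p * x + -1) ^ q * (q * y + -1) ^ p < (q * x + -1) ^ p * (p * y + -1) ^ q := by
    have := rpow_pos_of_pos hsy p
    have := rpow_pos_of_pos hrx q
    nlinarith
  linarith

/-- Wherever `crit` is at most `p - q < 0`, one has `(p x - 1) ^ q < (q x - 1) ^ p`; this then holds
for all smaller arguments, so that `crit` is increasing there. -/
lemma crit_neg_persist {p q x y : ℝ} (hp : 1 < p) (hpq : p < q) (hy : 0 < p * y + -1) (hyx : y ≤ x)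
    (h : crit p q (-1) x ≤ p - q) : crit p q (-1) y ≤ p - q := by
  have hq0 : 0 < q := by linarith
  have hp0 : 0 < p := by linarith
  have hp1 : 0 < p - 1 := by linarith
  have hq1 : 0 < q - 1 := by linarith
  have hr (z) (hz : z ∈ Icc y x) : 0 < p * z + -1 := by nlinarith [hz.1]
  have hs (z) (hz : z ∈ Icc y x) : 0 < q * z + -1 := by nlinarith [hr z hz, hz.1]
  have hx : x ∈ Icc y x := right_mem_Icc.2 hyx
  have hlt : (p * x + -1) ^ q < (q * x + -1) ^ p := by
    -- Otherwise `crit` would be nonnegative at `x`, as `p x - 1 ≤ q x - 1`.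
    by_contra! hc
    have hR := hr x hx
    have hS := hs x hx
    unfold crit at h
    rw [rpow_sub hS, rpow_sub hR, rpow_one, rpow_one] at h
    have h1 : (p * x + -1) / (p * x + -1) ^ q ≤ (p * x + -1) / (q * x + -1) ^ p := by gcongr
    have h2 : q * (p - 1) * ((p * x + -1) / (p * x + -1) ^ q)
        ≤ q * (p - 1) * ((p * x + -1) / (q * x + -1) ^ p) := by gcongr
    have h3 : q * (p - 1) * ((p * x + -1) / (q * x + -1) ^ p)
        ≤ p * (q - 1) * ((q * x + -1) / (q * x + -1) ^ p) := by
      rw [← mul_div_assoc, ← mul_div_assoc]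
      have : q * (p - 1) * (p * x + -1) ≤ p * (q - 1) * (q * x + -1) := by
        have : p * x + -1 ≤ q * x + -1 := by nlinarith
        have : q * (p - 1) ≤ p * (q - 1) := by nlinarith
        gcongr
      gcongr
    linarith
  refine le_trans ?_ h
  refine monotoneOn_of_deriv_nonneg (convex_Icc y x) (fun z hz => (hasDerivAt_crit (hr z hz)
    (hs z hz)).continuousAt.continuousWithinAt) (fun z hz => (hasDerivAt_crit
    (hr z (interior_subset hz)) (hs z
    (interior_subset hz))).differentiableAt.differentiableWithinAt) ?_
    (left_mem_Icc.2 hyx) hx hyx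
  intro z hz
  have hz' := interior_subset hz
  rw [(hasDerivAt_crit (hr z hz') (hs z hz')).deriv, rpow_neg (hr z hz').le, rpow_neg (hs z hz').le]
  have h1 := inv_anti₀ (rpow_pos_of_pos (hr z hz') q)
    (rpow_lt_persist hp hpq (hr z hz') hz'.2 hlt).le
  exact mul_nonneg (by positivity) (by linarith)

lemma log_ratio_lt {p q : ℝ} (hp : 1 < p) (hpq : p < q) :
    (q - 1) / q * log p < (p - 1) / p * log q := by
  have hp0 : 0 < p := by linarith
  have hq0 : 0 < q := by linarith
  have hip : 1 / p < 1 := by rw [div_lt_one hp0]; exact hp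
  have hi : 1 / q < 1 / p := one_div_lt_one_div_of_lt hp0 hpq
  have h := strictConcaveOn_log_Ioi.secant_strict_mono (a := 1) (x := 1 / q) (y := 1 / p)
    (by simp) (by simpa using hq0) (by simpa using hp0) (by linarith) (by linarith) hi
  rw [log_one, one_div, one_div, log_inv, log_inv, sub_zero, sub_zero] at h
  have e1 : -log p / (p⁻¹ - 1) = log p / ((p - 1) / p) := by
    rw [← neg_div_neg_eq, neg_neg]; congr 1; field_simp; ring
  have e2 : -log q / (q⁻¹ - 1) = log q / ((q - 1) / q) := by
    rw [← neg_div_neg_eq, neg_neg]; congr 1; field_simp; ring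
  rw [e1, e2, div_lt_div_iff₀ (div_pos (by linarith) hp0) (div_pos (by linarith) hq0)] at h
  linarith

/-- The value `logSide p q (p x - 1) - log x` expressed through `1 / x`. -/
lemma logSide_inv {p q x : ℝ} (hp : 1 < p) (hq : 1 < q) (hx : 0 < x) (hr : 0 < p * x + -1) :
    logSide p q (p * x + -1) = log x + log (((p - x⁻¹) ^ q + (p - 1) * x⁻¹ ^ q) / p) / q := by
  have hz : 0 < p - x⁻¹ := by
    have : p - x⁻¹ = (p * x + -1) / x := by field_simp; ring
    rw [this]; positivity
  have hp1 : 0 < p - 1 := by linarith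
  have hxq := rpow_pos_of_pos hx q
  have e : ((p * x + -1) ^ q + (p - 1)) / p
      = x ^ q * (((p - x⁻¹) ^ q + (p - 1) * x⁻¹ ^ q) / p) := by
    have : p * x + -1 = x * (p - x⁻¹) := by field_simp; ring
    rw [this, mul_rpow hx.le hz.le, inv_rpow hx.le]
    field_simp
  unfold logSide
  rw [e, log_mul hxq.ne' (by positivity), log_rpow hx]
  field_simp

lemma tendsto_gap {p q : ℝ} (hp : 1 < p) (hq : 1 < q) :
    Tendsto (gap p q (-1)) atTop (𝓝 ((q - 1) / q * log p - (p - 1) / p * log q)) := by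
  have key {p q : ℝ} (hp : 1 < p) (hq : 1 < q) :
      Tendsto (fun x : ℝ => log (((p - x⁻¹) ^ q + (p - 1) * x⁻¹ ^ q) / p) / q) atTop
        (𝓝 ((q - 1) / q * log p)) := by
    have hp0 : 0 < p := by linarith
    have hq0 : 0 < q := by linarith
    have hc : ContinuousAt (fun z : ℝ => log (((p - z) ^ q + (p - 1) * z ^ q) / p) / q) 0 := by
      have h1 : Continuous fun z : ℝ => ((p - z) ^ q + (p - 1) * z ^ q) / p :=
        ((((continuous_rpow_const hq0.le).comp (continuous_const.sub continuous_id)).add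
          (continuous_const.mul (continuous_rpow_const hq0.le)))).div_const p
      refine (h1.continuousAt.log ?_).div_const q
      have := rpow_pos_of_pos hp0 q
      rw [zero_rpow hq0.ne', sub_zero, mul_zero, add_zero]
      positivity
    have := hc.tendsto.comp tendsto_inv_atTop_zero
    have e : log (((p - 0) ^ q + (p - 1) * 0 ^ q) / p) / q = (q - 1) / q * log p := by
      have := rpow_pos_of_pos hp0 q
      rw [zero_rpow hq0.ne', sub_zero, mul_zero, add_zero, log_div this.ne' hp0.ne', log_rpow hp0]
      field_simp
    rwa [e] at this
  refine ((key hp hq).sub (key hq hp)).congr' ?_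
  filter_upwards [eventually_gt_atTop 1] with x hx
  unfold gap
  rw [logSide_inv hp hq (by linarith) (by nlinarith), logSide_inv hq hp (by linarith) (by nlinarith)]
  ring

lemma gap_neg_one_neg {p q x : ℝ} (hp : 1 < p) (hpq : p < q) (hr : 0 < p * x + -1) :
    gap p q (-1) x < 0 := by
  have hq : 1 < q := by linarith
  have hp0 : 0 < p := by linarith
  have hs' {y : ℝ} (hy : 0 ≤ p * y + -1) : 0 < q * y + -1 := by
    have : 0 < y := by nlinarith
    nlinarith
  -- `gap` decreases on `[1 / p, x]` in the first case and increases on `[x, ∞)` in the second.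
  by_cases h : crit p q (-1) x ≤ p - q
  · have hx : 1 / p ≤ x := by rw [div_le_iff₀ hp0]; linarith
    have hrI (y) (hy : y ∈ Icc (1 / p) x) : 0 ≤ p * y + -1 := by
      have := (div_le_iff₀ hp0).1 hy.1
      linarith
    have hrI' (y) (hy : y ∈ interior (Icc (1 / p) x)) : 0 < p * y + -1 := by
      rw [interior_Icc] at hy
      have := (div_lt_iff₀ hp0).1 hy.1
      linarith
    have hanti : gap p q (-1) x ≤ gap p q (-1) (1 / p) := by
      refine antitoneOn_of_deriv_nonpos (convex_Icc (1 / p) x)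
        (continuousOn_gap hp hq hrI fun y hy => (hs' (hrI y hy)).le)
        (fun y hy => (hasDerivAt_gap hp hq (hrI' y hy)
          (hs' (hrI' y hy).le)).differentiableAt.differentiableWithinAt) ?_
        (left_mem_Icc.2 hx) (right_mem_Icc.2 hx) hx
      intro y hy
      obtain ⟨c, hc, e⟩ := deriv_gap_eq hp hq (hrI' y hy) (hs' (hrI' y hy).le)
      rw [e]
      have := crit_neg_persist hp hpq (hrI' y hy) (interior_subset hy).2 h
      exact mul_nonpos_of_nonneg_of_nonpos hc.le (by linarith)
    have hend := gap_mid_neg (x := 1 / p) hp hpq (by field_simp; norm_num)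
      (by have := hs' (y := 1 / p) (by field_simp; norm_num)
          linarith)
    have e : p * (1 / p) = 1 := by field_simp
    unfold gap at hanti ⊢
    rw [e] at hanti hend
    rw [show (1 : ℝ) - 1 = 0 by norm_num] at hend
    rw [show (1 : ℝ) + -1 = 0 by norm_num, ← sub_eq_add_neg (q * (1 / p))] at hanti
    linarith
  · have hrI (y) (hy : y ∈ Ici x) : 0 < p * y + -1 := by
      have : x ≤ y := hy
      nlinarith
    have hmono : MonotoneOn (gap p q (-1)) (Ici x) := by
      refine monotoneOn_of_deriv_nonneg (convex_Ici x)
        (continuousOn_gap hp hq (fun y hy => (hrI y hy).le) fun y hy => (hs' (hrI y hy).le).le)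
        (fun y hy => (hasDerivAt_gap hp hq (hrI y (interior_subset hy))
          (hs' (hrI y (interior_subset hy)).le)).differentiableAt.differentiableWithinAt) ?_
      intro y hy
      have hy' := interior_subset hy
      obtain ⟨c, hc, e⟩ := deriv_gap_eq hp hq (hrI y hy') (hs' (hrI y hy').le)
      rw [e]
      have : p - q < crit p q (-1) y := by
        by_contra! hcon
        exact h (crit_neg_persist hp hpq hr hy' hcon)
      exact mul_nonneg hc.le (by linarith)
    have hlim := ge_of_tendsto (tendsto_gap hp hq) (b := gap p q (-1) x) (by
      filter_upwards [eventually_ge_atTop x] with y hy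
      exact hmono self_mem_Ici hy hy)
    have := log_ratio_lt hp hpq
    linarith

/-! ### Return to the variable `t` -/

lemma logSide_abs_lt {p q τ : ℝ} (hp : 1 < p) (hpq : p < q) (hτ : τ ≠ 0) :
    logSide p q |1 + p * τ| < logSide q p |1 + q * τ| := by
  rcases le_or_gt 0 (q * τ + 1) with h | h
  · have hr : 0 ≤ p * τ + 1 := by rcases le_total 0 τ with h' | h' <;> nlinarith
    have := gap_one_neg hp hpq h hτ
    rw [add_comm, add_comm 1, abs_of_nonneg hr, abs_of_nonneg h]
    exact sub_neg.1 this
  · rw [add_comm 1 (q * τ), abs_of_neg h]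
    rcases le_or_gt 0 (p * τ + 1) with h' | h'
    · have := gap_mid_neg (x := -τ) hp hpq (by linarith) (by linarith)
      rw [abs_of_nonneg (by linarith)]
      convert this using 2 <;> ring
    · have := sub_neg.1 (gap_neg_one_neg (x := -τ) hp hpq (by linarith))
      rw [abs_of_neg (by linarith)]
      convert this using 2 <;> ring

/-- Passage to the coordinate `τ = t / (1 - t)`. -/
lemma side_eq {p q t : ℝ} (hp : 1 < p) (hq : 1 < q) (ht : t ≠ 1) :
    ((1 / p) * |1 + (p - 1) * t| ^ q + ((p - 1) / p) * |1 - t| ^ q) ^ (1 / q)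
      = |1 - t| * exp (logSide p q |1 + p * (t / (1 - t))|) := by
  have hv : 1 - t ≠ 0 := sub_ne_zero.2 ht.symm
  have hq0 : q ≠ 0 := by linarith
  have hpos := logSide_arg_pos (q := q) hp (abs_nonneg (1 + p * (t / (1 - t))))
  have e1 : 1 + (p - 1) * t = (1 - t) * (1 + p * (t / (1 - t))) := by field_simp; ring
  have e2 : (1 / p) * |1 + (p - 1) * t| ^ q + ((p - 1) / p) * |1 - t| ^ q
      = |1 - t| ^ q * ((|1 + p * (t / (1 - t))| ^ q + (p - 1)) / p) := by
    rw [e1, abs_mul, mul_rpow (abs_nonneg _) (abs_nonneg _)]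
    ring
  rw [e2, mul_rpow (by positivity) hpos.le, ← rpow_mul (abs_nonneg _), mul_one_div_cancel hq0,
    rpow_one, logSide, rpow_def_of_pos hpos]
  congr 2
  ring

/-- The case `t = 1`, where `t / (1 - t)` is undefined. -/
lemma side_one {p q : ℝ} (hp : 1 < p) (hq : 1 < q) :
    ((1 / p) * |1 + (p - 1) * 1| ^ q + ((p - 1) / p) * |1 - 1| ^ q) ^ (1 / q)
      = exp ((q - 1) / q * log p) := by
  have hp0 : 0 < p := by linarith
  have hq0 : q ≠ 0 := by linarith
  have e : (1 / p) * |1 + (p - 1) * 1| ^ q + ((p - 1) / p) * |1 - 1| ^ q = p ^ (q - 1) := by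
    rw [show 1 + (p - 1) * 1 = p by ring, sub_self, abs_zero, zero_rpow hq0, abs_of_pos hp0,
      rpow_sub hp0, rpow_one]
    ring
  rw [e, ← rpow_mul hp0.le, rpow_def_of_pos hp0]
  congr 1
  ring

/-- Corollary: for 1 < p < q ≤ 2,
  [ (1/p)|1+(p−1)t|^q + ((p−1)/p)|1−t|^q ]^{1/q} ≤ [ (1/q)|1+(q−1)t|^p + ((q−1)/q)|1−t|^p ]^{1/p},
  strict for t ≠ 0. -/
theorem stmt_9 (p q : ℝ) (hp : 1 < p) (hpq : p < q) (hq : q ≤ 2) :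
    ∀ t : ℝ,
      ((1 / p) * |1 + (p - 1) * t| ^ q + ((p - 1) / p) * |1 - t| ^ q) ^ (1 / q)
        ≤ ((1 / q) * |1 + (q - 1) * t| ^ p + ((q - 1) / q) * |1 - t| ^ p) ^ (1 / p)
      ∧ (t ≠ 0 →
        ((1 / p) * |1 + (p - 1) * t| ^ q + ((p - 1) / p) * |1 - t| ^ q) ^ (1 / q)
          < ((1 / q) * |1 + (q - 1) * t| ^ p + ((q - 1) / q) * |1 - t| ^ p) ^ (1 / p)) := by
  have hq1 : 1 < q := by linarith
  intro t
  have strict : t ≠ 0 →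
      ((1 / p) * |1 + (p - 1) * t| ^ q + ((p - 1) / p) * |1 - t| ^ q) ^ (1 / q)
        < ((1 / q) * |1 + (q - 1) * t| ^ p + ((q - 1) / q) * |1 - t| ^ p) ^ (1 / p) := by
    intro ht
    by_cases h1 : t = 1
    · subst h1
      rw [side_one hp hq1, side_one hq1 hp]
      exact exp_lt_exp.2 (log_ratio_lt hp hpq)
    · have hv : 1 - t ≠ 0 := sub_ne_zero.2 (Ne.symm h1)
      rw [side_eq hp hq1 h1, side_eq hq1 hp h1]
      exact mul_lt_mul_of_pos_left
        (exp_lt_exp.2 (logSide_abs_lt hp hpq (div_ne_zero ht hv))) (abs_pos.2 hv)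
  refine ⟨?_, strict⟩
  by_cases ht : t = 0
  · subst ht
    have hp0 : p ≠ 0 := by linarith
    have hq0 : q ≠ 0 := by linarith
    have e {r : ℝ} (hr : r ≠ 0) : 1 / r + (r - 1) / r = 1 := by field_simp; ring
    simp only [mul_zero, add_zero, sub_zero, abs_one, one_rpow, mul_one, e hp0, e hq0, le_refl]
  · exact (strict ht).le
end
end

section
/- Let 1 < p < q < ∞ with p ≠ 2 and q ≠ 2. Let x = (2^{−1/p}, 2^{−1/p}), y = (2^{−1/q}, 2^{−1/q}), and let s = ε·√((p−1)/(q−1))·2^{2/p − 2/q} where ε ∈ {+1, −1}. Then the operator T = x^{p−1}⊗y + s·x^o⊗(y^o)^{q−1} satisfies ‖T‖ = 1 as an operator from ℓ^p_2 to ℓ^q_2, T is an extreme point of the closed unit ball of L(ℓ^p_2, ℓ^q_2), and ‖Tz‖_q < ‖z‖_p for every z ∈ ℝ² that is not a scalar multiple of x. -/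
/-! In the coordinates `z = (a + b, a - b)` the operator is, up to the factor `2^(1/p-1/q)` coming
from the normalization of the norms, the two-point noise operator `(a, b) ↦ (a, σ b)` with
`|σ| = √((p-1)/(q-1))`. That `T` is a contraction is therefore the two-point hypercontractive
inequality of Bonami and Beckner, and the strict inequality off the line `ℝ x` is its strict form
for `b ≠ 0` (`hyper`). It is proved by Gross's method: the normalized `r`-norm of
`1 ± t √((p-1)/(r-1))` decreases in `r`, its derivative being controlled by the two-point
logarithmic Sobolev inequality (`log_sobolev`) and the Stroock–Varopoulos inequality.

For extremality, let `T = α A + β B` with contractions `A` and `B`. Strict convexity of the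
`q`-norm forces `A x = B x = T x`. A contraction with this property is of the form
`(a, b) ↦ (a, e b)` in the coordinates above, with `e² ≤ (p-1)/(q-1) = σ²`: this is the
second-order condition for the norm inequality at `x` (`second_order_rigidity`). As `σ` is a convex
combination of two such numbers, both equal `σ`, so `A = T`. -/

noncomputable section

/-! ### The two-point logarithmic Sobolev inequality -/

/-- Two-point Stroock–Varopoulos inequality: the Cauchy–Schwarz bound
`(∫_b^a s^(r/2-1) ds)² ≤ (a - b) ∫_b^a s^(r-2) ds`, integrated explicitly. The proof is the
discriminant argument for the polynomial `l ↦ ∫_b^a (l - s^(r/2-1))² ds ≥ 0`. -/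
lemma stroock_varopoulos {r a b : ℝ} (hr : 1 < r) (hb : 0 < b) (hab : b ≤ a) :
    4 * (r - 1) * (a ^ (r / 2) - b ^ (r / 2)) ^ 2 ≤
      r ^ 2 * ((a - b) * (a ^ (r - 1) - b ^ (r - 1))) := by
  have key : ∀ l : ℝ, 0 ≤ (a - b) * (l * l) + (-(4 / r) * (a ^ (r / 2) - b ^ (r / 2))) * l +
      (a ^ (r - 1) - b ^ (r - 1)) / (r - 1) := by
    intro l
    have hd : ∀ s : ℝ, 0 < s → HasDerivAt (fun s : ℝ => s * (l * l) - (4 / r) * s ^ (r / 2) * l +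
        s ^ (r - 1) / (r - 1)) ((l - s ^ (r / 2 - 1)) ^ 2) s := by
      intro s hs
      have h1 := (hasDerivAt_id s).mul_const (l * l)
      have h2 := ((Real.hasDerivAt_rpow_const (p := r / 2) (Or.inl hs.ne')).const_mul (4 / r)).mul_const l
      have h3 := (Real.hasDerivAt_rpow_const (p := r - 1) (Or.inl hs.ne')).div_const (r - 1)
      refine ((h1.sub h2).add h3).congr_deriv ?_
      have e : s ^ (r - 1 - 1) = s ^ (r / 2 - 1) * s ^ (r / 2 - 1) := by
        rw [← Real.rpow_add hs]; congr 1; ring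
      have hr1 : r - 1 ≠ 0 := by linarith
      have hr0 : r ≠ 0 := by linarith
      rw [e]; field_simp; ring
    have hm : MonotoneOn (fun s : ℝ => s * (l * l) - (4 / r) * s ^ (r / 2) * l +
        s ^ (r - 1) / (r - 1)) (Set.Ioi 0) := by
      apply monotoneOn_of_deriv_nonneg (convex_Ioi 0)
      · exact fun s hs => (hd s hs).continuousAt.continuousWithinAt
      · exact fun s hs => (hd s (interior_subset hs)).differentiableAt.differentiableWithinAt
      · intro s hs
        rw [(hd s (interior_subset hs)).deriv]; positivity
    have := hm (Set.mem_Ioi.2 hb) (Set.mem_Ioi.2 (hb.trans_le hab)) hab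
    simp only at this
    have e : (a ^ (r - 1) - b ^ (r - 1)) / (r - 1) = a ^ (r - 1) / (r - 1) - b ^ (r - 1) / (r - 1) := by ring
    rw [e]; linarith
  have := discrim_le_zero key
  unfold discrim at this
  have hr1 : 0 < r - 1 := by linarith
  have e : (-(4 / r) * (a ^ (r / 2) - b ^ (r / 2))) ^ 2 - 4 * (a - b) * ((a ^ (r - 1) - b ^ (r - 1)) / (r - 1))
    = 4 / (r ^ 2 * (r - 1)) * (4 * (r - 1) * (a ^ (r / 2) - b ^ (r / 2)) ^ 2 -
      r ^ 2 * ((a - b) * (a ^ (r - 1) - b ^ (r - 1)))) := by field_simp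
  rw [e] at this
  have hc : 0 < 4 / (r ^ 2 * (r - 1)) := by positivity
  nlinarith [this, hc]

lemma log_bound {b : ℝ} (hb : 0 < b) (hb1 : b < 1) : 0 < 1 - b + Real.log ((1 + b ^ 2) / 2) := by
  have hd : ∀ s : ℝ, HasDerivAt (fun s : ℝ => 1 - s + Real.log ((1 + s ^ 2) / 2))
      (-((1 - s) ^ 2 / (1 + s ^ 2))) s := by
    intro s
    have h0 : (1 + s ^ 2) / 2 ≠ 0 := by positivity
    have h1 := (((hasDerivAt_pow 2 s).const_add 1).div_const 2).log h0
    have h2 := (hasDerivAt_id s).const_sub 1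
    refine (h2.add h1).congr_deriv ?_
    field_simp
    push_cast
    ring
  have hm : StrictAntiOn (fun s : ℝ => 1 - s + Real.log ((1 + s ^ 2) / 2)) (Set.Icc 0 1) := by
    apply strictAntiOn_of_deriv_neg (convex_Icc 0 1)
    · exact fun s _ => (hd s).continuousAt.continuousWithinAt
    · intro s hs
      rw [interior_Icc] at hs
      rw [(hd s).deriv]
      have : 0 < 1 - s := by linarith [hs.2]
      have : 0 < (1 - s) ^ 2 / (1 + s ^ 2) := by positivity
      linarith
  have := hm ⟨hb.le, hb1.le⟩ (⟨zero_le_one, le_rfl⟩ : (1:ℝ) ∈ Set.Icc (0:ℝ) 1) hb1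
  norm_num at this
  linarith

/-- Two-point logarithmic Sobolev inequality `Ent(g²) ≤ (A - B)² / 2` for the function `g` taking
the values `A` and `B` with probability `1/2` each. For fixed `B` the deficit, as a function of
`s = A`, has derivative `s * (1 - B/s + log ((1 + (B/s)²) / 2))`, which is positive by `log_bound`. -/
lemma log_sobolev {A B : ℝ} (hB : 0 < B) (hAB : B < A) :
    A ^ 2 * Real.log A + B ^ 2 * Real.log B -
      (A ^ 2 + B ^ 2) / 2 * Real.log ((A ^ 2 + B ^ 2) / 2) < (A - B) ^ 2 / 2 := by
  have hd : ∀ s : ℝ, 0 < s → HasDerivAt (fun s : ℝ => (s - B) ^ 2 / 2 -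
      (s ^ 2 * Real.log s + B ^ 2 * Real.log B -
      (s ^ 2 + B ^ 2) / 2 * Real.log ((s ^ 2 + B ^ 2) / 2)))
      (s * (1 - B / s + Real.log ((1 + (B / s) ^ 2) / 2))) s := by
    intro s hs
    have h0 : (s ^ 2 + B ^ 2) / 2 ≠ 0 := by positivity
    have h1 := (((hasDerivAt_id s).sub_const B).pow 2).div_const 2
    have h2 := (hasDerivAt_pow 2 s).mul (Real.hasDerivAt_log hs.ne')
    have hi := (((hasDerivAt_pow 2 s).add_const (B ^ 2)).div_const 2)
    have h3 := hi.mul (hi.log h0)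
    refine (h1.sub ((h2.add_const (B ^ 2 * Real.log B)).sub h3)).congr_deriv ?_
    have e : (1 + (B / s) ^ 2) / 2 = ((s ^ 2 + B ^ 2) / 2) / s ^ 2 := by field_simp
    rw [e, Real.log_div h0 (by positivity), Real.log_pow]
    simp only [id]
    field_simp
    push_cast
    ring
  have hm : StrictMonoOn (fun s : ℝ => (s - B) ^ 2 / 2 -
      (s ^ 2 * Real.log s + B ^ 2 * Real.log B -
      (s ^ 2 + B ^ 2) / 2 * Real.log ((s ^ 2 + B ^ 2) / 2))) (Set.Ici B) := by
    apply strictMonoOn_of_deriv_pos (convex_Ici B)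
    · exact fun s hs => (hd s (hB.trans_le hs)).continuousAt.continuousWithinAt
    · intro s hs
      rw [interior_Ici] at hs
      have hs0 : 0 < s := hB.trans hs
      rw [(hd s hs0).deriv]
      exact mul_pos hs0 (log_bound (by positivity) ((div_lt_one hs0).2 hs))
  have := hm Set.self_mem_Ici (Set.mem_Ici.2 hAB.le) hAB
  simp only at this
  have e : (B ^ 2 + B ^ 2) / 2 = B ^ 2 := by ring
  rw [e, Real.log_pow] at this
  push_cast at this
  linarith

/-- The logarithmic Sobolev inequality for `g = (1 ± u)^(r/2)`, with the right-hand side bounded by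
`stroock_varopoulos`: this is the form in which it meets the derivative of `r ↦ ‖1 ± u(r)‖_r`. -/
lemma log_sobolev_rpow {r u : ℝ} (hr : 1 < r) (hu : 0 < u) (hu1 : u < 1) :
    r * (((1 + u) ^ r * Real.log (1 + u) + (1 - u) ^ r * Real.log (1 - u)) / 2) -
      (((1 + u) ^ r + (1 - u) ^ r) / 2) * Real.log (((1 + u) ^ r + (1 - u) ^ r) / 2) <
    r ^ 2 * u / (4 * (r - 1)) * ((1 + u) ^ (r - 1) - (1 - u) ^ (r - 1)) := by
  have ha : 0 < 1 + u := by linarith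
  have hb : 0 < 1 - u := by linarith
  have h1 := log_sobolev (A := (1 + u) ^ (r / 2)) (B := (1 - u) ^ (r / 2)) (by positivity)
    (Real.rpow_lt_rpow hb.le (by linarith) (by linarith))
  have h2 := stroock_varopoulos hr hb (by linarith : 1 - u ≤ 1 + u)
  have e : ∀ c : ℝ, 0 < c → (c ^ (r / 2)) ^ 2 = c ^ r := by
    intro c hc
    rw [← Real.rpow_natCast, ← Real.rpow_mul hc.le]; congr 1; push_cast; ring
  rw [e _ ha, e _ hb, Real.log_rpow ha, Real.log_rpow hb] at h1
  have hr1 : 0 < r - 1 := by linarith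
  have h3 : ((1 + u) ^ (r / 2) - (1 - u) ^ (r / 2)) ^ 2 / 2 ≤
      r ^ 2 * u / (4 * (r - 1)) * ((1 + u) ^ (r - 1) - (1 - u) ^ (r - 1)) := by
    rw [div_mul_eq_mul_div, div_le_div_iff₀ (by norm_num) (by positivity)]
    nlinarith [h2]
  linarith

/-! ### The two-point hypercontractive inequality -/

/-- Strict hypercontractivity for the pair `(1 + t, 1 - t)` with `0 < t ≤ 1`. Along the curve
`u(r) = t √((p-1)/(r-1))`, the logarithm `log (φ r) / r` of the normalized `r`-norm of
`(1 + u(r), 1 - u(r))` is strictly decreasing on `[p, ∞)`, by `log_sobolev_rpow`. -/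
lemma hyper_unit {p q t : ℝ} (hp : 1 < p) (hpq : p < q) (ht : 0 < t) (ht1 : t ≤ 1) :
    (((1 + √((p - 1) / (q - 1)) * t) ^ q + (1 - √((p - 1) / (q - 1)) * t) ^ q) / 2) ^ (1 / q) <
    (((1 + t) ^ p + (1 - t) ^ p) / 2) ^ (1 / p) := by
  set u : ℝ → ℝ := fun r => √((p - 1) / (r - 1)) * t with hu
  set φ : ℝ → ℝ := fun r => ((1 + u r) ^ r + (1 - u r) ^ r) / 2 with hφ
  have hp1 : 0 < p - 1 := by linarith
  have hup : u p = t := by simp [hu, div_self hp1.ne']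
  have hu0 : ∀ r, p ≤ r → 0 < u r := by
    intro r hr
    have : 0 < r - 1 := by linarith
    simp only [hu]; positivity
  have hu1 : ∀ r, p < r → u r < 1 := by
    intro r hr
    have h : √((p - 1) / (r - 1)) < 1 := by
      rw [Real.sqrt_lt' one_pos, one_pow, div_lt_one] <;> linarith
    have := hu0 r hr.le
    simp only [hu] at this ⊢
    nlinarith
  have hu1' : ∀ r, p ≤ r → u r ≤ 1 := by
    intro r hr
    rcases hr.eq_or_lt with rfl | h
    · rw [hup]; exact ht1
    · exact (hu1 r h).le
  have hφ0 : ∀ r, p ≤ r → 0 < φ r := by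
    intro r hr
    have h1 := hu0 r hr
    have h2 : 0 ≤ 1 - u r := by linarith [hu1' r hr]
    simp only [hφ]; positivity
  have hud : ∀ r, p < r → HasDerivAt u (-(u r / (2 * (r - 1)))) r := by
    intro r hr
    have hr1 : 0 < r - 1 := by linarith
    have h0 : 0 < (p - 1) / (r - 1) := by positivity
    have h1 := (((hasDerivAt_const r (p - 1)).div ((hasDerivAt_id r).sub_const 1)
      hr1.ne').sqrt h0.ne').mul_const t
    refine h1.congr_deriv ?_
    have e : √((p - 1) / (r - 1)) ^ 2 = (p - 1) / (r - 1) := Real.sq_sqrt h0.le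
    have hs : 0 < √((p - 1) / (r - 1)) := Real.sqrt_pos.2 h0
    simp only [hu, id, Pi.div_apply]
    generalize √((p - 1) / (r - 1)) = w at *
    rw [eq_div_iff hr1.ne'] at e
    rw [← e]
    field_simp
    ring
  have hFd : ∀ r, p < r → HasDerivAt (fun r => Real.log (φ r) / r)
      (((((1 + u r) ^ r * Real.log (1 + u r) + (1 - u r) ^ r * Real.log (1 - u r)) / 2 -
        u r * r / (4 * (r - 1)) * ((1 + u r) ^ (r - 1) - (1 - u r) ^ (r - 1))) / φ r * r -
        Real.log (φ r)) / r ^ 2) r := by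
    intro r hr
    have hr0 : r ≠ 0 := by linarith
    have ha : 0 < 1 + u r := by linarith [hu0 r hr.le]
    have hb : 0 < 1 - u r := by linarith [hu1 r hr]
    have h1 := ((hud r hr).const_add 1).rpow (hasDerivAt_id r) ha
    have h2 := ((hud r hr).const_sub 1).rpow (hasDerivAt_id r) hb
    have h3 := ((h1.add h2).div_const 2).log (hφ0 r hr.le).ne'
    refine (h3.div (hasDerivAt_id r) hr0).congr_deriv ?_
    have hr1 : r - 1 ≠ 0 := by linarith
    simp only [id, mul_one]
    congr 3
    congr 1
    field_simp
    ring
  -- At `r = p` with `t = 1` the base `1 - u` vanishes, so only continuity is used there.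
  have hm : StrictAntiOn (fun r => Real.log (φ r) / r) (Set.Ici p) := by
    apply strictAntiOn_of_deriv_neg (convex_Ici p)
    · have hcu : ContinuousOn u (Set.Ici p) := by
        apply ContinuousOn.mul _ continuousOn_const
        apply ContinuousOn.sqrt
        apply ContinuousOn.div continuousOn_const (by fun_prop)
        intro r hr
        have : p ≤ r := hr
        linarith
      have hr0 : ∀ r ∈ Set.Ici p, 0 < r := fun r hr => by
        have : p ≤ r := hr
        linarith
      apply ContinuousOn.div _ continuousOn_id (fun r hr => (hr0 r hr).ne')
      apply ContinuousOn.log _ (fun r hr => (hφ0 r hr).ne')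
      apply ContinuousOn.div_const
      exact ((continuousOn_const.add hcu).rpow continuousOn_id (fun r hr => Or.inr (hr0 r hr))).add
        ((continuousOn_const.sub hcu).rpow continuousOn_id (fun r hr => Or.inr (hr0 r hr)))
    · intro r hr
      rw [interior_Ici] at hr
      have hr : p < r := hr
      rw [(hFd r hr).deriv]
      have hls := log_sobolev_rpow (hp.trans hr) (hu0 r hr.le) (hu1 r hr)
      have hφr := hφ0 r hr.le
      have hr0 : 0 < r := by linarith
      apply div_neg_of_neg_of_pos _ (by positivity)
      rw [sub_neg, div_mul_eq_mul_div, div_lt_iff₀ hφr]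
      have e : r ^ 2 * u r / (4 * (r - 1)) = r * (u r * r / (4 * (r - 1))) := by ring
      rw [e] at hls
      simp only [hφ]
      linarith
  have hlt := hm (Set.self_mem_Ici) (Set.mem_Ici.2 hpq.le) hpq
  have hq := hφ0 q hpq.le
  have hpp := hφ0 p le_rfl
  have h1 : φ q ^ (1 / q) < φ p ^ (1 / p) := by
    rw [Real.rpow_def_of_pos hq, Real.rpow_def_of_pos hpp, Real.exp_lt_exp, mul_one_div, mul_one_div]
    exact hlt
  simp only [hφ, hup] at h1
  exact h1

/-- The normalized `r`-norm of `(a + b, a - b)`, that is, its norm in `L^r` of the uniform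
probability on two points. -/
def pmean (r a b : ℝ) : ℝ := ((|a + b| ^ r + |a - b| ^ r) / 2) ^ (1 / r)

lemma pnorm_eq_pmean {r : ℝ} (a b : ℝ) :
    pnorm r (a + b, a - b) = 2 ^ (1 / r) * pmean r a b := by
  unfold pnorm pmean
  rw [← Real.mul_rpow (by norm_num) (by positivity)]
  congr 1; ring

lemma pmean_abs (r a b : ℝ) : pmean r |a| |b| = pmean r a b := by
  unfold pmean
  congr 2
  rcases abs_cases a with ⟨h, -⟩ | ⟨h, -⟩ <;> rcases abs_cases b with ⟨h', -⟩ | ⟨h', -⟩ <;>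
    rw [h, h']
  · rw [sub_neg_eq_add, ← sub_eq_add_neg, add_comm]
  · rw [← abs_neg (-a + b), ← abs_neg (-a - b), add_comm]
    congr 3 <;> ring
  · rw [← abs_neg (-a + -b), ← abs_neg (-a - -b)]
    congr 3 <;> ring

lemma pmean_comm (r a b : ℝ) : pmean r a b = pmean r b a := by
  unfold pmean; rw [add_comm a b, abs_sub_comm]

lemma pmean_mul {r c : ℝ} (hr : 0 < r) (hc : 0 ≤ c) (a b : ℝ) :
    pmean r (c * a) (c * b) = c * pmean r a b := by
  unfold pmean
  have e : (|c * a + c * b| ^ r + |c * a - c * b| ^ r) / 2 =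
      c ^ r * ((|a + b| ^ r + |a - b| ^ r) / 2) := by
    rw [← mul_add, ← mul_sub, abs_mul, abs_mul, abs_of_nonneg hc,
      Real.mul_rpow hc (abs_nonneg _), Real.mul_rpow hc (abs_nonneg _)]; ring
  rw [e, Real.mul_rpow (by positivity) (by positivity), ← Real.rpow_mul hc,
    mul_one_div_cancel hr.ne', Real.rpow_one]

lemma pmean_zero {r : ℝ} (hr : 0 < r) (a : ℝ) : pmean r a 0 = |a| := by
  unfold pmean
  rw [add_zero, sub_zero, add_self_div_two, ← Real.rpow_mul (abs_nonneg _),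
    mul_one_div_cancel hr.ne', Real.rpow_one]

/-- For `0 ≤ a < b` the two coordinates of the right-hand pair dominate those of the left-hand
pair; since `pmean p` is symmetric in `a` and `b`, this reduces hypercontractivity to `b ≤ a`. -/
lemma pmean_swap_lt {q ρ a b : ℝ} (hq : 1 < q) (h0 : 0 ≤ ρ) (h1 : ρ < 1) (ha : 0 ≤ a) (hab : a < b) :
    pmean q a (ρ * b) < pmean q b (ρ * a) := by
  unfold pmean
  have hρa := mul_nonneg h0 ha
  have hρb := mul_nonneg h0 (ha.trans hab.le)
  have hq0 : 0 < q := by linarith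
  apply Real.rpow_lt_rpow (by positivity) _ (by positivity)
  have i1 : |a + ρ * b| ^ q < |b + ρ * a| ^ q := by
    apply Real.rpow_lt_rpow (abs_nonneg _) _ (by linarith)
    rw [abs_of_nonneg (by linarith), abs_of_nonneg (by linarith)]
    nlinarith
  have i2 : |a - ρ * b| ^ q ≤ |b - ρ * a| ^ q := by
    apply Real.rpow_le_rpow (abs_nonneg _) _ (by linarith)
    refine le_trans ?_ (le_abs_self _)
    rw [abs_le]; constructor <;> nlinarith
  linarith

lemma hyper_pos {p q a b : ℝ} (hp : 1 < p) (hpq : p < q) (hb : 0 < b) (hab : b ≤ a) :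
    pmean q a (√((p - 1) / (q - 1)) * b) < pmean p a b := by
  have ha : 0 < a := hb.trans_le hab
  have hρ : √((p - 1) / (q - 1)) < 1 := by
    rw [Real.sqrt_lt' one_pos, one_pow, div_lt_one] <;> linarith
  have ht : 0 < b / a := by positivity
  have ht1 : b / a ≤ 1 := (div_le_one ha).2 hab
  have h := hyper_unit hp hpq ht ht1
  have hs := Real.sqrt_nonneg ((p - 1) / (q - 1))
  have hst : 0 ≤ √((p - 1) / (q - 1)) * (b / a) := by positivity
  have hst1 : √((p - 1) / (q - 1)) * (b / a) ≤ 1 := by nlinarith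
  have e1 : pmean q a (√((p - 1) / (q - 1)) * b) =
      a * pmean q 1 (√((p - 1) / (q - 1)) * (b / a)) := by
    rw [← pmean_mul (by linarith) ha.le]; congr 1 <;> field_simp
  have e2 : pmean p a b = a * pmean p 1 (b / a) := by
    rw [← pmean_mul (by linarith) ha.le]; congr 1 <;> field_simp
  rw [e1, e2]
  apply mul_lt_mul_of_pos_left _ ha
  unfold pmean
  rwa [abs_of_nonneg (by linarith), abs_of_nonneg (by linarith), abs_of_nonneg (by linarith),
    abs_of_nonneg (by linarith)]

/-- Strict two-point hypercontractivity (Bonami–Beckner) for real values. -/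
lemma hyper {p q σ a b : ℝ} (hp : 1 < p) (hpq : p < q) (hσ : |σ| = √((p - 1) / (q - 1)))
    (hb : b ≠ 0) : pmean q a (σ * b) < pmean p a b := by
  rw [← pmean_abs q, ← pmean_abs p, abs_mul, hσ]
  have hb' : 0 < |b| := abs_pos.2 hb
  rcases le_or_gt |b| |a| with h | h
  · exact hyper_pos hp hpq hb' h
  · have hρ : √((p - 1) / (q - 1)) < 1 := by
      rw [Real.sqrt_lt' one_pos, one_pow, div_lt_one] <;> linarith
    refine (pmean_swap_lt (by linarith) (Real.sqrt_nonneg _) hρ (abs_nonneg a) h).trans_le ?_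
    rw [pmean_comm p]
    rcases (abs_nonneg a).eq_or_lt with h0 | h0
    · rw [← h0, mul_zero, pmean_zero (by linarith), pmean_zero (by linarith)]
    · exact (hyper_pos hp hpq h0 h.le).le

/-! ### Second-order rigidity at the point where the norm is attained -/

open Filter Topology in
lemma tendsto_second_order (r e : ℝ) :
    Tendsto (fun t : ℝ => (((1 + t * e) ^ r + (1 - t * e) ^ r) / 2 - 1) / t ^ 2) (𝓝[≠] 0)
      (𝓝 (r * (r - 1) / 2 * e ^ 2)) := by
  have c1 : ∀ᶠ t : ℝ in 𝓝 0, 0 < 1 + t * e := by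
    have : ContinuousAt (fun t : ℝ => 1 + t * e) 0 := by fun_prop
    exact this.eventually (lt_mem_nhds (by norm_num))
  have c2 : ∀ᶠ t : ℝ in 𝓝 0, 0 < 1 - t * e := by
    have : ContinuousAt (fun t : ℝ => 1 - t * e) 0 := by fun_prop
    exact this.eventually (lt_mem_nhds (by norm_num))
  have hd : ∀ k t : ℝ, 0 < 1 + t * e → HasDerivAt (fun t : ℝ => (1 + t * e) ^ k)
      (e * k * (1 + t * e) ^ (k - 1)) t := fun k t h =>
    ((((hasDerivAt_id t).mul_const e).const_add 1).rpow_const (p := k) (Or.inl h.ne')).congr_deriv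
      (by simp)
  have hd' : ∀ k t : ℝ, 0 < 1 - t * e → HasDerivAt (fun t : ℝ => (1 - t * e) ^ k)
      (-(e * k * (1 - t * e) ^ (k - 1))) t := fun k t h =>
    ((((hasDerivAt_id t).mul_const e).const_sub 1).rpow_const (p := k) (Or.inl h.ne')).congr_deriv
      (by simp)
  have hf : ∀ᶠ t : ℝ in 𝓝 0, HasDerivAt (fun t : ℝ => ((1 + t * e) ^ r + (1 - t * e) ^ r) / 2 - 1)
      (e * r / 2 * ((1 + t * e) ^ (r - 1) - (1 - t * e) ^ (r - 1))) t := by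
    filter_upwards [c1, c2] with t h1 h2
    exact ((((hd r t h1).add (hd' r t h2)).div_const 2).sub_const 1).congr_deriv (by ring)
  refine HasDerivAt.lhopital_zero_nhdsNE (f' := fun t =>
      e * r / 2 * ((1 + t * e) ^ (r - 1) - (1 - t * e) ^ (r - 1))) (g' := fun t => 2 * t)
    (hf.filter_mono nhdsWithin_le_nhds) ?_ ?_ ?_ ?_ ?_
  · exact Eventually.of_forall fun t => (hasDerivAt_pow 2 t).congr_deriv (by norm_num)
  · filter_upwards [self_mem_nhdsWithin] with t ht
    simpa using ht
  · have := hf.self_of_nhds.continuousAt.tendsto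
    simp only [zero_mul, add_zero, sub_zero, Real.one_rpow] at this
    norm_num at this
    exact this.mono_left nhdsWithin_le_nhds
  · have : ContinuousAt (fun t : ℝ => t ^ 2) 0 := by fun_prop
    have := this.tendsto
    simp only [ne_eq, OfNat.ofNat_ne_zero, not_false_eq_true, zero_pow] at this
    exact this.mono_left nhdsWithin_le_nhds
  · have h := (((hd (r - 1) 0 c1.self_of_nhds).sub (hd' (r - 1) 0 c2.self_of_nhds)).const_mul
      (e * r / 4))
    have h := hasDerivAt_iff_tendsto_slope.1 h
    convert h using 2
    · rename_i t
      simp [slope_def_field]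
      ring
    · simp; ring

open Filter Topology in
/-- A contraction that agrees with `T` at `x` is constrained to first order (`f = -e`, because
the difference of the two sides has a maximum at `t = 0`) and to second order (comparing the
`t²` coefficients) in the direction transverse to `x`. -/
lemma second_order_rigidity {p q e f : ℝ} (hp : 1 < p) (hpq : p < q)
    (h : ∀ t : ℝ, (|1 + t * e| ^ q + |1 + t * f| ^ q) / 2 ≤
      ((|1 + t| ^ p + |1 - t| ^ p) / 2) ^ (q / p)) :
    f = -e ∧ e ^ 2 ≤ (p - 1) / (q - 1) := by
  have hp0 : 0 < p := by linarith
  have hq0 : 0 < q := by linarith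
  have pos : ∀ c : ℝ, ∀ᶠ t : ℝ in 𝓝 0, 0 < 1 + t * c := by
    intro c
    have : ContinuousAt (fun t : ℝ => 1 + t * c) 0 := by fun_prop
    exact this.eventually (lt_mem_nhds (by norm_num))
  have h' : ∀ᶠ t : ℝ in 𝓝 0, ((1 + t * e) ^ q + (1 + t * f) ^ q) / 2 ≤
      (((1 + t * 1) ^ p + (1 + t * (-1)) ^ p) / 2) ^ (q / p) := by
    filter_upwards [pos e, pos f, pos 1, pos (-1)] with t h1 h2 h3 h4
    have := h t
    rw [abs_of_pos h1, abs_of_pos h2] at this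
    rwa [← abs_of_pos h3, ← abs_of_pos h4, mul_one, mul_neg_one, ← sub_eq_add_neg]
  have hd : ∀ k c : ℝ, HasDerivAt (fun t : ℝ => (1 + t * c) ^ k) (c * k) 0 := fun k c =>
    ((((hasDerivAt_id (0:ℝ)).mul_const c).const_add 1).rpow_const (p := k)
      (Or.inl (by simp))).congr_deriv (by simp)
  have hfe : f = -e := by
    have hw := (((hd p 1).add (hd p (-1))).div_const 2).rpow_const (p := q / p)
      (Or.inl (by simp))
    have hD := (((hd q e).add (hd q f)).div_const 2).sub hw
    have hmax : IsLocalMax (fun t : ℝ => ((1 + t * e) ^ q + (1 + t * f) ^ q) / 2 -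
      (((1 + t * 1) ^ p + (1 + t * (-1)) ^ p) / 2) ^ (q / p)) 0 := by
      filter_upwards [h'] with t ht
      simp
      simp at ht
      linarith
    have := hmax.hasDerivAt_eq_zero hD
    have e1 : (1 * p + -1 * p) / 2 = 0 := by ring
    rw [e1, zero_mul, zero_mul, sub_zero] at this
    have : q * (e + f) = 0 := by linarith
    rcases mul_eq_zero.1 this with h | h <;> linarith
  refine ⟨hfe, ?_⟩
  have L := tendsto_second_order q e
  have hw : Tendsto (fun t : ℝ => ((1 + t * 1) ^ p + (1 - t * 1) ^ p) / 2) (𝓝[≠] 0) (𝓝 1) := by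
    have := (((hd p 1).add (hd p (-1))).div_const 2).continuousAt.tendsto
    simp [← sub_eq_add_neg] at this
    simpa using this.mono_left nhdsWithin_le_nhds
  have hk : HasDerivAt (fun w : ℝ => w ^ (q / p)) (q / p) 1 :=
    (Real.hasDerivAt_rpow_const (p := q / p) (Or.inl one_ne_zero)).congr_deriv (by simp)
  have hds := (continuousAt_dslope_same.2 hk.differentiableAt).tendsto.comp hw
  rw [dslope_same, hk.deriv] at hds
  have R := hds.mul (tendsto_second_order p 1)
  have hle := le_of_tendsto_of_tendsto L R (by
    filter_upwards [h'.filter_mono nhdsWithin_le_nhds, self_mem_nhdsWithin] with t ht ht0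
    have ht0 : t ≠ 0 := ht0
    simp only [Function.comp]
    -- `w ^ (q / p) - 1 = (w - 1) * dslope`, with `w = φ_p(t) → 1`.
    rw [← mul_div_assoc, mul_comm (dslope _ _ _), ← smul_eq_mul (_ - _), sub_smul_dslope]
    apply div_le_div_of_nonneg_right _ (by positivity)
    rw [Real.one_rpow, hfe] at *
    simp only [mul_neg, mul_one, ← sub_eq_add_neg] at ht ⊢
    linarith)
  have hq1 : 0 < q - 1 := by linarith
  rw [le_div_iff₀ hq1]
  have e1 : q / p * (p * (p - 1) / 2 * 1 ^ 2) = q / 2 * (p - 1) := by field_simp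
  rw [e1] at hle
  have : q / 2 * (e ^ 2 * (q - 1)) ≤ q / 2 * (p - 1) := by linarith
  exact le_of_mul_le_mul_left this (by linarith)

/-! ### Contractions in the coordinates `(a + b, a - b)` -/

/-- Strict convexity of `|·|^q` at `1`; outside `[0, ∞)` the tangent line is negative. -/
lemma tangent_lt {q m : ℝ} (hq : 1 < q) (hm : m ≠ 1) : 1 + q * (m - 1) < |m| ^ q := by
  rcases le_or_gt 0 m with h | h
  · have := one_add_mul_self_lt_rpow_one_add (s := m - 1) (by linarith) (sub_ne_zero.2 hm) hq
    rw [add_sub_cancel] at this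
    rwa [abs_of_nonneg h]
  · have : 0 ≤ |m| ^ q := by positivity
    nlinarith

lemma tangent_le {q m : ℝ} (hq : 1 < q) : 1 + q * (m - 1) ≤ |m| ^ q := by
  rcases eq_or_ne m 1 with rfl | h
  · simp
  · exact (tangent_lt hq h).le

lemma pnorm_nonneg (r : ℝ) (z : ℝ × ℝ) : 0 ≤ pnorm r z := by unfold pnorm; positivity

lemma pnorm_smul {r : ℝ} (hr : 0 < r) (c : ℝ) (z : ℝ × ℝ) : pnorm r (c • z) = |c| * pnorm r z := by
  unfold pnorm
  simp only [Prod.smul_fst, Prod.smul_snd, smul_eq_mul, abs_mul]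
  rw [Real.mul_rpow (abs_nonneg _) (abs_nonneg _), Real.mul_rpow (abs_nonneg _) (abs_nonneg _),
    ← mul_add, Real.mul_rpow (by positivity) (by positivity), ← Real.rpow_mul (abs_nonneg _),
    mul_one_div_cancel hr.ne', Real.rpow_one]

lemma abs_le_pnorm {r : ℝ} (hr : 0 < r) (z : ℝ × ℝ) : |z.1| ≤ pnorm r z ∧ |z.2| ≤ pnorm r z := by
  unfold pnorm
  have h1 : 0 ≤ |z.1| ^ r := by positivity
  have h2 : 0 ≤ |z.2| ^ r := by positivity
  constructor
  · calc |z.1| = (|z.1| ^ r) ^ (1 / r) := by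
          rw [← Real.rpow_mul (abs_nonneg _), mul_one_div_cancel hr.ne', Real.rpow_one]
      _ ≤ _ := Real.rpow_le_rpow h1 (by linarith) (by positivity)
  · calc |z.2| = (|z.2| ^ r) ^ (1 / r) := by
          rw [← Real.rpow_mul (abs_nonneg _), mul_one_div_cancel hr.ne', Real.rpow_one]
      _ ≤ _ := Real.rpow_le_rpow h2 (by linarith) (by positivity)

lemma app_smul (A : Matrix (Fin 2) (Fin 2) ℝ) (c : ℝ) (z : ℝ × ℝ) : app A (c • z) = c • app A z := by
  unfold app; ext <;> simp <;> ring

/-- The set defining `opNorm` is bounded, so its `sSup` is not the junk value `0`. -/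
lemma bddAbove_opNorm {p q : ℝ} (hp : 0 < p) (hq : 0 < q) (A : Matrix (Fin 2) (Fin 2) ℝ) :
    BddAbove {c : ℝ | ∃ z : ℝ × ℝ, pnorm p z = 1 ∧ c = pnorm q (app A z)} := by
  refine ⟨((|A 0 0| + |A 0 1|) ^ q + (|A 1 0| + |A 1 1|) ^ q) ^ (1 / q), ?_⟩
  rintro c ⟨z, hz, rfl⟩
  obtain ⟨h1, h2⟩ := abs_le_pnorm hp z
  rw [hz] at h1 h2
  have key : ∀ a b : ℝ, |a * z.1 + b * z.2| ≤ |a| + |b| := by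
    intro a b
    calc |a * z.1 + b * z.2| ≤ |a| * |z.1| + |b| * |z.2| := by
          rw [← abs_mul, ← abs_mul]; exact abs_add_le _ _
      _ ≤ _ := by nlinarith [abs_nonneg a, abs_nonneg b]
  unfold pnorm app
  apply Real.rpow_le_rpow (by positivity) _ (by positivity)
  exact add_le_add (Real.rpow_le_rpow (abs_nonneg _) (key _ _) hq.le)
    (Real.rpow_le_rpow (abs_nonneg _) (key _ _) hq.le)

lemma pnorm_app_le {p q : ℝ} (hp : 0 < p) (hq : 0 < q) {A : Matrix (Fin 2) (Fin 2) ℝ}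
    (hA : A ∈ unitBall p q) (z : ℝ × ℝ) : pnorm q (app A z) ≤ pnorm p z := by
  rcases (pnorm_nonneg p z).eq_or_lt with h | h
  · obtain ⟨h1, h2⟩ := abs_le_pnorm hp z
    rw [← h] at h1 h2
    have e1 := abs_nonpos_iff.1 h1
    have e2 := abs_nonpos_iff.1 h2
    rw [← h]
    unfold pnorm app
    simp [e1, e2, Real.zero_rpow hq.ne', Real.zero_rpow (inv_ne_zero hq.ne')]
  · have hn : pnorm p ((pnorm p z)⁻¹ • z) = 1 := by
      rw [pnorm_smul hp, abs_of_pos (inv_pos.2 h), inv_mul_cancel₀ h.ne']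
    have h1 : pnorm q (app A ((pnorm p z)⁻¹ • z)) ≤ 1 :=
      (le_csSup (bddAbove_opNorm hp hq A) ⟨_, hn, rfl⟩).trans hA
    rw [app_smul, pnorm_smul hq, abs_of_pos (inv_pos.2 h), inv_mul_le_iff₀ h, mul_one] at h1
    exact h1

/-- The contraction inequality for `A` tested on `(1 + t, 1 - t)`, where
`A (1, 1) = 2^(1/p-1/q) (m, n)` and `A (1, -1) = 2^(1/p-1/q) (e, f)`. -/
lemma contraction_coords {p q : ℝ} (hp : 0 < p) (hq : 0 < q) {A : Matrix (Fin 2) (Fin 2) ℝ}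
    (hA : A ∈ unitBall p q) {m n e f : ℝ}
    (h00 : A 0 0 = 2 ^ (1 / p - 1 / q) * (m + e) / 2) (h01 : A 0 1 = 2 ^ (1 / p - 1 / q) * (m - e) / 2)
    (h10 : A 1 0 = 2 ^ (1 / p - 1 / q) * (n + f) / 2) (h11 : A 1 1 = 2 ^ (1 / p - 1 / q) * (n - f) / 2)
    (t : ℝ) : (|m + t * e| ^ q + |n + t * f| ^ q) / 2 ≤
      ((|1 + t| ^ p + |1 - t| ^ p) / 2) ^ (q / p) := by
  have h := pnorm_app_le hp hq hA (1 + t, 1 - t)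
  have e1 : app A (1 + t, 1 - t) = (2:ℝ) ^ (1 / p - 1 / q) • (m + t * e, n + t * f) := by
    unfold app
    rw [h00, h01, h10, h11]
    ext <;> simp <;> ring
  rw [e1, pnorm_smul hq, abs_of_pos (by positivity), pnorm_eq_pmean] at h
  have e2 : pnorm q (m + t * e, n + t * f) =
      2 ^ (1 / q) * ((|m + t * e| ^ q + |n + t * f| ^ q) / 2) ^ (1 / q) := by
    unfold pnorm
    rw [← Real.mul_rpow (by norm_num) (by positivity)]
    congr 1; ring
  rw [e2, ← mul_assoc, ← Real.rpow_add two_pos, sub_add_cancel] at h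
  have h := le_of_mul_le_mul_left h (by positivity)
  unfold pmean at h
  have h := Real.rpow_le_rpow (by positivity) h hq.le
  rw [← Real.rpow_mul (by positivity), ← Real.rpow_mul (by positivity), one_div_mul_cancel hq.ne',
    Real.rpow_one, one_div_mul_eq_div] at h
  exact h

lemma exists_coords {L : ℝ} (hL : L ≠ 0) (A : Matrix (Fin 2) (Fin 2) ℝ) : ∃ m n e f : ℝ,
    A 0 0 = L * (m + e) / 2 ∧ A 0 1 = L * (m - e) / 2 ∧
    A 1 0 = L * (n + f) / 2 ∧ A 1 1 = L * (n - f) / 2 := by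
  refine ⟨(A 0 0 + A 0 1) / L, (A 1 0 + A 1 1) / L, (A 0 0 - A 0 1) / L, (A 1 0 - A 1 1) / L,
    ?_, ?_, ?_, ?_⟩ <;> field_simp <;> ring

/-! ### The operator `T` -/

lemma abs_sigma {p q ε σ : ℝ} (hε : ε = 1 ∨ ε = -1) (hσ : σ = ε * √((p - 1) / (q - 1))) :
    |σ| = √((p - 1) / (q - 1)) := by
  have := Real.sqrt_nonneg ((p - 1) / (q - 1))
  rcases hε with h | h <;> rw [hσ, h] <;> simp [abs_of_nonneg this]

/-- The matrix of `T`: it acts as `2^(1/p-1/q)` times the map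
`(a + b, a - b) ↦ (a + σ b, a - σ b)`, where `σ = ± √((p-1)/(q-1))`. -/
lemma operator_eq (p q : ℝ)
    (ε : ℝ) (x y : ℝ × ℝ) (hx : x = ((2 : ℝ) ^ (-(1 / p) : ℝ), (2 : ℝ) ^ (-(1 / p) : ℝ)))
    (hp : 1 < p) (hq : 1 < q)
    (hy : y = ((2 : ℝ) ^ (-(1 / q) : ℝ), (2 : ℝ) ^ (-(1 / q) : ℝ)))
    (s : ℝ) (hs : s = ε * Real.sqrt ((p - 1) / (q - 1)) * (2 : ℝ) ^ (2 / p - 2 / q))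
    (T : Matrix (Fin 2) (Fin 2) ℝ)
    (hT : T = tensor (spow x (p - 1)) y + s • tensor (rot x) (spow (rot y) (q - 1)))
    (σ : ℝ) (hσ : σ = ε * √((p - 1) / (q - 1))) :
    T 0 0 = 2 ^ (1 / p - 1 / q) * (1 + σ) / 2 ∧ T 0 1 = 2 ^ (1 / p - 1 / q) * (1 - σ) / 2 ∧
    T 1 0 = 2 ^ (1 / p - 1 / q) * (1 - σ) / 2 ∧ T 1 1 = 2 ^ (1 / p - 1 / q) * (1 + σ) / 2 := by
  have hp0 : p ≠ 0 := by linarith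
  have hq0 : q ≠ 0 := by linarith
  have hX : 0 < (2:ℝ) ^ (-(1 / p)) := by positivity
  have hY : 0 < (2:ℝ) ^ (-(1 / q)) := by positivity
  have e1 : (2:ℝ) ^ (-(1 / q)) * ((2:ℝ) ^ (-(1 / p))) ^ (p - 1) = 2 ^ (1 / p - 1 / q) / 2 := by
    rw [← Real.rpow_mul two_pos.le, ← Real.rpow_add two_pos, ← Real.rpow_sub_one two_ne_zero]
    congr 1; field_simp; ring
  have e2 : (2 : ℝ) ^ (2 / p - 2 / q) * (((2:ℝ) ^ (-(1 / q))) ^ (q - 1) * (2:ℝ) ^ (-(1 / p))) =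
      2 ^ (1 / p - 1 / q) / 2 := by
    rw [← Real.rpow_mul two_pos.le, ← Real.rpow_add two_pos, ← Real.rpow_add two_pos,
      ← Real.rpow_sub_one two_ne_zero]
    congr 1; field_simp; ring
  have hs' : s = σ * (2 : ℝ) ^ (2 / p - 2 / q) := by rw [hs, hσ]
  subst hT hx hy
  simp only [tensor, spow, rot, Real.sign_of_pos hX, Real.sign_of_pos hY,
    Real.sign_of_neg (neg_lt_zero.2 hY), abs_neg, abs_of_pos hX, abs_of_pos hY, hs']
  simp only [Matrix.add_apply, Matrix.smul_apply, Matrix.of_apply, Matrix.cons_val', Matrix.cons_val_zero,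
    Matrix.cons_val_one, Matrix.cons_val_fin_one, smul_eq_mul, one_mul]
  refine ⟨?_, ?_, ?_, ?_⟩
  · linear_combination e1 + σ * e2
  · linear_combination e1 - σ * e2
  · linear_combination e1 - σ * e2
  · linear_combination e1 + σ * e2

lemma app_coords {L σ : ℝ} {T : Matrix (Fin 2) (Fin 2) ℝ} (h : T 0 0 = L * (1 + σ) / 2 ∧
    T 0 1 = L * (1 - σ) / 2 ∧ T 1 0 = L * (1 - σ) / 2 ∧ T 1 1 = L * (1 + σ) / 2) (a b : ℝ) :
    app T (a + b, a - b) = L • (a + σ * b, a - σ * b) := by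
  unfold app
  rw [h.1, h.2.1, h.2.2.1, h.2.2.2]
  ext <;> simp <;> ring

/-- For 1 < p < q < ∞, p,q ≠ 2, the operators built from the symmetric vectors
  x = (2^{-1/p}, 2^{-1/p}), y = (2^{-1/q}, 2^{-1/q}) and s = ±√((p−1)/(q−1))·2^{2/p−2/q}
  are extreme contractions attaining their norm only in the direction of x. -/
theorem stmt_10 (p q : ℝ) (hp : 1 < p) (hpq : p < q) (hp2 : p ≠ 2) (hq2 : q ≠ 2)
    (ε : ℝ) (hε : ε = 1 ∨ ε = -1)
    (x y : ℝ × ℝ) (hx : x = ((2 : ℝ) ^ (-(1 / p) : ℝ), (2 : ℝ) ^ (-(1 / p) : ℝ)))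
    (hy : y = ((2 : ℝ) ^ (-(1 / q) : ℝ), (2 : ℝ) ^ (-(1 / q) : ℝ)))
    (s : ℝ) (hs : s = ε * Real.sqrt ((p - 1) / (q - 1)) * (2 : ℝ) ^ (2 / p - 2 / q))
    (T : Matrix (Fin 2) (Fin 2) ℝ)
    (hT : T = tensor (spow x (p - 1)) y + s • tensor (rot x) (spow (rot y) (q - 1))) :
    opNorm p q T = 1 ∧
    T ∈ Set.extremePoints ℝ (unitBall p q) ∧
    ∀ z : ℝ × ℝ, (¬ ∃ c : ℝ, z = c • x) → pnorm q (app T z) < pnorm p z := by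
  have hp0 : 0 < p := by linarith
  have hq : 1 < q := by linarith
  have hq0 : 0 < q := by linarith
  obtain ⟨σ, hσ⟩ : ∃ σ, σ = ε * √((p - 1) / (q - 1)) := ⟨_, rfl⟩
  have hT' := operator_eq p q ε x y hx hp hq hy s hs T hT σ hσ
  have hσa := abs_sigma hε hσ
  have hnorm : ∀ a b : ℝ, pnorm q (app T (a + b, a - b)) = 2 ^ (1 / p) * pmean q a (σ * b) := by
    intro a b
    rw [app_coords hT', pnorm_smul hq0, abs_of_pos (by positivity), pnorm_eq_pmean, ← mul_assoc,
      ← Real.rpow_add two_pos, sub_add_cancel]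
  have hcoord : ∀ z : ℝ × ℝ, z = ((z.1 + z.2) / 2 + (z.1 - z.2) / 2,
      (z.1 + z.2) / 2 - (z.1 - z.2) / 2) := by
    intro z; ext <;> simp <;> ring
  have hstrict : ∀ a b : ℝ, b ≠ 0 → pnorm q (app T (a + b, a - b)) < pnorm p (a + b, a - b) := by
    intro a b hb
    rw [hnorm, pnorm_eq_pmean]
    exact mul_lt_mul_of_pos_left (hyper hp hpq hσa hb) (by positivity)
  have hdiag : ∀ a : ℝ, pnorm q (app T (a + 0, a - 0)) = pnorm p (a + 0, a - 0) := by
    intro a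
    rw [hnorm, pnorm_eq_pmean, mul_zero, pmean_zero hq0, pmean_zero hp0]
  have hle : ∀ z, pnorm q (app T z) ≤ pnorm p z := by
    intro z
    rw [hcoord z]
    rcases eq_or_ne ((z.1 - z.2) / 2) 0 with h | h
    · rw [h]; exact (hdiag _).le
    · exact (hstrict _ _ h).le
  have hx0 : x = ((2:ℝ) ^ (-(1 / p)) + 0, (2:ℝ) ^ (-(1 / p)) - 0) := by rw [hx, add_zero, sub_zero]
  have hxn : pnorm p x = 1 := by
    rw [hx0, pnorm_eq_pmean, pmean_zero hp0, abs_of_pos (by positivity), ← Real.rpow_add two_pos,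
      add_neg_cancel, Real.rpow_zero]
  have hopn : opNorm p q T = 1 := by
    apply IsGreatest.csSup_eq
    refine ⟨⟨x, hxn, ?_⟩, ?_⟩
    · rw [← hxn, hx0, hdiag]
    · rintro c ⟨z, hz, rfl⟩
      exact (hle z).trans hz.le
  refine ⟨hopn, ⟨hopn.le, ?_⟩, ?_⟩
  · rintro A hA B hB ⟨α, β, hα, hβ, hαβ, hAB⟩
    have hL : (2:ℝ) ^ (1 / p - 1 / q) ≠ 0 := by positivity
    obtain ⟨m, n, e, f, A00, A01, A10, A11⟩ := exists_coords hL A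
    obtain ⟨m', n', e', f', B00, B01, B10, B11⟩ := exists_coords hL B
    have hcA := contraction_coords hp0 hq0 hA A00 A01 A10 A11
    have hcB := contraction_coords hp0 hq0 hB B00 B01 B10 B11
    obtain ⟨t00, t01, t10, t11⟩ := hT'
    rw [← hAB] at t00 t01 t10 t11
    simp only [Matrix.add_apply, Matrix.smul_apply, smul_eq_mul] at t00 t01 t10 t11
    rw [A00, B00] at t00
    rw [A01, B01] at t01
    rw [A10, B10] at t10
    rw [A11, B11] at t11
    have hm : α * m + β * m' = 1 := mul_left_cancel₀ hL (by linear_combination t00 + t01)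
    have hn : α * n + β * n' = 1 := mul_left_cancel₀ hL (by linear_combination t10 + t11)
    have he : α * e + β * e' = σ := mul_left_cancel₀ hL (by linear_combination t00 - t01)
    -- At `t = 0` the contraction inequality says that `(m, n)` and `(m', n')` lie in the ball
    -- `|·|^q + |·|^q ≤ 2`, of which their convex combination `(1, 1)` is an extreme point.
    have kA := hcA 0
    have kB := hcB 0
    norm_num at kA kB
    have am := tangent_le (m := m) hq
    have an := tangent_le (m := n) hq
    have bm := tangent_le (m := m') hq
    have bn := tangent_le (m := n') hq
    have sumA : |m| ^ q - (1 + q * (m - 1)) + (|n| ^ q - (1 + q * (n - 1))) ≤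
        -(q * (m + n - 2)) := by linarith
    have sumB : |m'| ^ q - (1 + q * (m' - 1)) + (|n'| ^ q - (1 + q * (n' - 1))) ≤
        -(q * (m' + n' - 2)) := by linarith
    have hzero : α * (-(q * (m + n - 2))) + β * (-(q * (m' + n' - 2))) = 0 := by
      linear_combination (-q) * hm - q * hn + 2 * q * hαβ
    have s1 := mul_le_mul_of_nonneg_left sumA hα.le
    have s2 := mul_le_mul_of_nonneg_left sumB hβ.le
    have p1 := mul_nonneg hα.le (sub_nonneg.2 am)
    have p2 := mul_nonneg hα.le (sub_nonneg.2 an)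
    have p3 := mul_nonneg hβ.le (sub_nonneg.2 bm)
    have p4 := mul_nonneg hβ.le (sub_nonneg.2 bn)
    have m1 : m = 1 := by
      by_contra h
      have := mul_pos hα (sub_pos.2 (tangent_lt hq h))
      linarith
    have n1 : n = 1 := by
      by_contra h
      have := mul_pos hα (sub_pos.2 (tangent_lt hq h))
      linarith
    have m1' : m' = 1 := by
      by_contra h
      have := mul_pos hβ (sub_pos.2 (tangent_lt hq h))
      linarith
    have n1' : n' = 1 := by
      by_contra h
      have := mul_pos hβ (sub_pos.2 (tangent_lt hq h))
      linarith
    subst m1 n1 m1' n1'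
    obtain ⟨hf, hE⟩ := second_order_rigidity hp hpq hcA
    obtain ⟨-, hE'⟩ := second_order_rigidity hp hpq hcB
    have hq1 : 0 < q - 1 := by linarith
    have hp1 : 0 < p - 1 := by linarith
    have hσ2 : σ ^ 2 = (p - 1) / (q - 1) := by
      rw [← sq_abs, hσa, Real.sq_sqrt (by positivity)]
    rw [← hσ2] at hE hE'
    have hEσ : e = σ := by
      -- `α (e - σ)² + β (e' - σ)² = α e² + β e'² - σ² ≤ 0`.
      have h1 := mul_le_mul_of_nonneg_left hE hα.le
      have h2 := mul_le_mul_of_nonneg_left hE' hβ.le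
      have h3 : α * (e - σ) ^ 2 + β * (e' - σ) ^ 2 =
          α * e ^ 2 + β * e' ^ 2 - (α * σ ^ 2 + β * σ ^ 2) := by
        linear_combination (-2 * σ) * he + 2 * σ ^ 2 * hαβ
      have h4 : 0 ≤ β * (e' - σ) ^ 2 := by positivity
      have h5 : α * (e - σ) ^ 2 ≤ 0 := by linarith
      have h6 : (e - σ) ^ 2 = 0 := le_antisymm (nonpos_of_mul_nonpos_right h5 hα) (sq_nonneg _)
      exact sub_eq_zero.1 (pow_eq_zero_iff two_ne_zero |>.1 h6)
    obtain ⟨t00, t01, t10, t11⟩ := operator_eq p q ε x y hx hp hq hy s hs T hT σ hσ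
    ext i j
    fin_cases i <;> fin_cases j <;> simp
    · rw [A00, t00, hEσ]
    · rw [A01, t01, hEσ]
    · rw [A10, t10, hf, hEσ]; ring
    · rw [A11, t11, hf, hEσ]; ring
  · intro z hz
    have h : (z.1 - z.2) / 2 ≠ 0 := by
      intro h
      apply hz
      refine ⟨z.1 * 2 ^ (1 / p), ?_⟩
      have h12 : z.2 = z.1 := by linarith
      have e : z.1 * 2 ^ (1 / p) * (2:ℝ) ^ (-(1 / p)) = z.1 := by
        rw [mul_assoc, ← Real.rpow_add two_pos, add_neg_cancel, Real.rpow_zero, mul_one]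
      rw [hx]
      ext
      · simp only [Prod.smul_fst, smul_eq_mul]; exact e.symm
      · simp only [Prod.smul_snd, smul_eq_mul, h12]; exact e.symm
    rw [hcoord z]
    exact hstrict _ _ h
end
end
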